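/- arXiv:1902.09034 — 2 statements merged into one kernel-verified Lean document; each statement's English description precedes it below -/
import Mathlib

section
/- Let α ∈ 𝕀 be an irrational power series such that the degrees of the partial quotients A_k(α) in its continued fraction expansion tend to infinity as k → ∞. Then for every ε with 0 < ε ≤ q^{−2}, the set Bad^ε(α) has Hausdorff dimension 1. -/
/-!
Common setup: the field `𝔽_q((z⁻¹))` of formal power series over a finite field `K` of
cardinality `q`, modeled as the field `FF K` of formal Laurent series in `t = z⁻¹`,
together with its non-Archimedean norm, the embedding of the polynomial ring `𝔽_q[z]`,
distances to polynomial (vectors), Diophantine exponents, `Bad` sets, continued fractions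
and best approximation sequences.
-/

open scoped Classical ENNReal NNReal
open Filter

noncomputable section

set_option linter.unusedSectionVars false

namespace FPSDA

variable (K : Type*) [Field K] [Fintype K]

/-- The field `𝔽_q((z⁻¹))` of formal power series in `z⁻¹` over the finite field `K = 𝔽_q`,
modeled as the field of formal Laurent series in the variable `t = z⁻¹`. -/
def FF : Type _ := LaurentSeries K

instance : Field (FF K) := inferInstanceAs (Field (LaurentSeries K))

variable {K}

/-- The identity map, viewing an element of `𝔽_q((z⁻¹))` as a Laurent series in `t = z⁻¹`. -/
def toL (x : FF K) : LaurentSeries K := x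

@[simp] lemma toL_zero : toL (0 : FF K) = 0 := rfl
@[simp] lemma toL_add (x y : FF K) : toL (x + y) = toL x + toL y := rfl
@[simp] lemma toL_neg (x : FF K) : toL (-x) = -toL x := rfl
@[simp] lemma toL_sub (x y : FF K) : toL (x - y) = toL x - toL y := rfl
lemma toL_eq_zero {x : FF K} : toL x = 0 ↔ x = 0 := Iff.rfl

/-- The norm `‖x‖ = q ^ (deg x)` on `𝔽_q((z⁻¹))`, where
`deg x = - (order of x as a Laurent series in z⁻¹)`; `‖0‖ = 0`. -/
def fnorm (x : FF K) : ℝ :=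
  if toL x = 0 then 0 else (Fintype.card K : ℝ) ^ (-(toL x).order)

lemma one_le_q : (1 : ℝ) ≤ (Fintype.card K : ℝ) := by
  exact_mod_cast Fintype.card_pos

lemma fnorm_nonneg (x : FF K) : 0 ≤ fnorm x := by
  unfold fnorm
  split_ifs
  · exact le_refl 0
  · exact zpow_nonneg (by positivity) _

lemma fnorm_eq_zero {x : FF K} : fnorm x = 0 ↔ x = 0 := by
  unfold fnorm
  split_ifs with h
  · exact ⟨fun _ => toL_eq_zero.mp h, fun _ => rfl⟩
  · constructor
    · intro hc
      exact absurd hc (zpow_ne_zero _ (by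
        have h0 : (0:ℝ) < (Fintype.card K : ℝ) := by positivity
        exact ne_of_gt h0))
    · intro hc
      exact absurd (toL_eq_zero.mpr hc) h

lemma fnorm_neg (x : FF K) : fnorm (-x) = fnorm x := by
  unfold fnorm
  rw [toL_neg]
  simp [neg_eq_zero, HahnSeries.order_neg]

lemma fnorm_add_le (x y : FF K) : fnorm (x + y) ≤ max (fnorm x) (fnorm y) := by
  by_cases hxy : x + y = 0
  · rw [fnorm_eq_zero.mpr hxy]
    exact le_max_of_le_left (fnorm_nonneg x)
  by_cases hx : x = 0
  · rw [hx, zero_add]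
    exact le_max_right _ _
  by_cases hy : y = 0
  · rw [hy, add_zero]
    exact le_max_left _ _
  have horder : min (toL x).order (toL y).order ≤ (toL (x + y)).order := by
    rw [toL_add]
    exact HahnSeries.min_order_le_order_add (show toL x + toL y ≠ 0 from hxy)
  have h1 : fnorm (x + y) = (Fintype.card K : ℝ) ^ (-(toL (x+y)).order) := by
    unfold fnorm
    rw [if_neg (show toL (x + y) ≠ 0 from hxy)]
  rcases le_total (toL x).order (toL y).order with h | h
  · have h2 : (toL x).order ≤ (toL (x+y)).order := le_trans (by simp [min_eq_left h]) horder
    refine le_max_of_le_left ?_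
    rw [h1]
    unfold fnorm
    rw [if_neg (show toL x ≠ 0 from hx)]
    exact zpow_le_zpow_right₀ one_le_q (by omega)
  · have h2 : (toL y).order ≤ (toL (x+y)).order := le_trans (by simp [min_eq_right h]) horder
    refine le_max_of_le_right ?_
    rw [h1]
    unfold fnorm
    rw [if_neg (show toL y ≠ 0 from hy)]
    exact zpow_le_zpow_right₀ one_le_q (by omega)

/-- The (ultra)metric `dist x y = ‖x - y‖` on `𝔽_q((z⁻¹))`. -/
instance : MetricSpace (FF K) where
  dist x y := fnorm (x - y)
  dist_self x := by
    show fnorm (x - x) = 0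
    rw [sub_self]
    exact fnorm_eq_zero.mpr rfl
  dist_comm x y := by
    show fnorm (x - y) = fnorm (y - x)
    have h : x - y = -(y - x) := by ring
    rw [h, fnorm_neg]
  dist_triangle x y z := by
    show fnorm (x - z) ≤ fnorm (x - y) + fnorm (y - z)
    have h : x - z = (x - y) + (y - z) := by ring
    calc fnorm (x - z) ≤ max (fnorm (x - y)) (fnorm (y - z)) := by
          rw [h]; exact fnorm_add_le _ _
      _ ≤ fnorm (x - y) + fnorm (y - z) :=
        max_le (le_add_of_nonneg_right (fnorm_nonneg _)) (le_add_of_nonneg_left (fnorm_nonneg _))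
  eq_of_dist_eq_zero := by
    intro x y h
    have h' : x - y = 0 := fnorm_eq_zero.mp h
    exact sub_eq_zero.mp h'

instance : MeasurableSpace (FF K) := borel _
instance : BorelSpace (FF K) := ⟨rfl⟩

/-- The canonical embedding of the polynomial ring `𝔽_q[z]` into `𝔽_q((z⁻¹))`:
the variable `z` is sent to `t⁻¹ = single (-1) 1`. -/
def polyF (P : Polynomial K) : FF K :=
  Polynomial.aeval (HahnSeries.single (-1 : ℤ) (1 : K)) P

/-- Supremum norm of a vector with entries in `𝔽_q((z⁻¹))`. -/
def vnorm {ι : Type*} [Fintype ι] (v : ι → FF K) : ℝ := ⨆ i, fnorm (v i)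

/-- `⟨v⟩`, the distance from the vector `v` to the nearest polynomial vector. -/
def vdist {ι : Type*} [Fintype ι] (v : ι → FF K) : ℝ :=
  ⨅ y : ι → Polynomial K, vnorm (fun i => v i - polyF (y i))

/-- `⟨x⟩`, the distance from the scalar `x` to the nearest polynomial. -/
def sdist (x : FF K) : ℝ := ⨅ y : Polynomial K, fnorm (x - polyF y)

/-- The fractional part `{x} = Σ_{i ≥ 1} a_i z^{-i}` of `x = Σ_i a_i z^{-i}`. -/
def fracPart (x : FF K) : FF K :=
  (⟨fun i => if 1 ≤ i then (toL x).coeff i else 0, (toL x).isPWO_support'.mono (by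
      intro i hi
      by_cases h : (1:ℤ) ≤ i
      · simpa [Function.mem_support, h] using hi
      · simp [Function.mem_support, h] at hi)⟩ : LaurentSeries K)

/-- The integer part `[x] = Σ_{i ≤ 0} a_i z^{-i}` of `x = Σ_i a_i z^{-i}`, as a polynomial
in `z`. -/
def intPoly (x : FF K) : Polynomial K :=
  ∑ i ∈ Finset.range ((-(toL x).order).toNat + 1),
    Polynomial.monomial i ((toL x).coeff (-(i : ℤ)))

/-- `x ∈ 𝔽_q((z⁻¹))` is irrational if it is not in `𝔽_q(z)`, i.e. is not a ratio of two
polynomials in `z`. -/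
def FIrrational (x : FF K) : Prop :=
  ∀ P Q : Polynomial K, Q ≠ 0 → x * polyF Q ≠ polyF P

section Exponents

variable {m n : ℕ}

/-- The norm `‖x‖ = max_j ‖x_j‖` of a polynomial vector `x`. -/
def pnorm {ι : Type*} [Fintype ι] (x : ι → Polynomial K) : ℝ :=
  vnorm (fun i => (polyF (x i) : FF K))

/-- The system `⟨A x - θ⟩ ≤ H^{-ω}`, `‖x‖ ≤ H` has a polynomial solution `x`. -/
def Solv (A : Matrix (Fin n) (Fin m) (FF K)) (θ : Fin n → FF K) (ω H : ℝ) : Prop :=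
  ∃ x : Fin m → Polynomial K,
    vdist (A.mulVec (fun j => polyF (x j)) - θ) ≤ H ^ (-ω) ∧ pnorm x ≤ H

/-- The system `⟨A x⟩ ≤ H^{-ω}`, `‖x‖ ≤ H` has a nonzero polynomial solution `x`. -/
def SolvHom (A : Matrix (Fin n) (Fin m) (FF K)) (ω H : ℝ) : Prop :=
  ∃ x : Fin m → Polynomial K, x ≠ 0 ∧
    vdist (A.mulVec (fun j => polyF (x j))) ≤ H ^ (-ω) ∧ pnorm x ≤ H

/-- The inhomogeneous exponent `ω(A, θ)`: the supremum (in `[0,∞]`) of all `ω` such that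
for arbitrarily large `H` the system `⟨A x - θ⟩ ≤ H^{-ω}`, `‖x‖ ≤ H` has a polynomial
solution. -/
def omegaInhom (A : Matrix (Fin n) (Fin m) (FF K)) (θ : Fin n → FF K) : ℝ≥0∞ :=
  ⨆ (ω : ℝ) (_ : ∀ H₀ : ℝ, ∃ H : ℝ, H₀ ≤ H ∧ Solv A θ ω H), ENNReal.ofReal ω

/-- The uniform inhomogeneous exponent `ω̂(A, θ)`: as `ω(A, θ)`, but with a solution for
all sufficiently large `H`. -/
def omegaHatInhom (A : Matrix (Fin n) (Fin m) (FF K)) (θ : Fin n → FF K) : ℝ≥0∞ :=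
  ⨆ (ω : ℝ) (_ : ∃ H₀ : ℝ, ∀ H : ℝ, H₀ ≤ H → Solv A θ ω H), ENNReal.ofReal ω

/-- The homogeneous exponent `ω(A)`. -/
def omegaHom (A : Matrix (Fin n) (Fin m) (FF K)) : ℝ≥0∞ :=
  ⨆ (ω : ℝ) (_ : ∀ H₀ : ℝ, ∃ H : ℝ, H₀ ≤ H ∧ SolvHom A ω H), ENNReal.ofReal ω

/-- The uniform homogeneous exponent `ω̂(A)`. -/
def omegaHatHom (A : Matrix (Fin n) (Fin m) (FF K)) : ℝ≥0∞ :=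
  ⨆ (ω : ℝ) (_ : ∃ H₀ : ℝ, ∀ H : ℝ, H₀ ≤ H → SolvHom A ω H), ENNReal.ofReal ω

/-- `A` is non-degenerate: the `𝔽_q[z]`-module `Aᵀ 𝔽_q[z]ⁿ + 𝔽_q[z]^m ⊆ 𝔽_q((z⁻¹))^m` has
rank `m + n` over `𝔽_q[z]`, i.e. its `m + n` natural generators are linearly independent
over `𝔽_q[z]`; equivalently, no nonzero polynomial vector `u` makes `Aᵀ u` a polynomial
vector. -/
def Nondegenerate (A : Matrix (Fin n) (Fin m) (FF K)) : Prop :=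
  ∀ u : Fin n → Polynomial K,
    (∃ v : Fin m → Polynomial K,
      A.transpose.mulVec (fun i => polyF (u i)) = fun j => polyF (v j)) → u = 0

/-- `liminf_{x ∈ 𝔽_q[z]^m, ‖x‖ → ∞} ‖x‖^{m/n} ⟨A x - θ⟩`, computed in `[0, ∞]`. -/
def badLiminf (A : Matrix (Fin n) (Fin m) (FF K)) (θ : Fin n → FF K) : ℝ≥0∞ :=
  Filter.liminf
    (fun x : Fin m → Polynomial K =>
      ENNReal.ofReal ((pnorm x) ^ ((m : ℝ) / (n : ℝ)) *
        vdist (A.mulVec (fun j => polyF (x j)) - θ)))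
    (Filter.comap (fun x : Fin m → Polynomial K => pnorm x) Filter.atTop)

/-- The set `Bad^ε(A)` of `θ` in the unit polydisc `𝕀ⁿ` with
`liminf_{‖x‖ → ∞} ‖x‖^{m/n} ⟨A x - θ⟩ ≥ ε`. -/
def Bad (A : Matrix (Fin n) (Fin m) (FF K)) (ε : ℝ) : Set (Fin n → FF K) :=
  {θ | (∀ i, fnorm (θ i) < 1) ∧ ENNReal.ofReal ε ≤ badLiminf A θ}

/-- The set `Bad(A) = ⋃_{ε > 0} Bad^ε(A)`. -/
def BadAll (A : Matrix (Fin n) (Fin m) (FF K)) : Set (Fin n → FF K) :=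
  ⋃ (ε : ℝ) (_ : 0 < ε), Bad A ε

/-- `M(y) = ⟨Aᵀ y⟩` for a polynomial vector `y`. -/
def Mfun (A : Matrix (Fin n) (Fin m) (FF K)) (y : Fin n → Polynomial K) : ℝ :=
  vdist (A.transpose.mulVec (fun i => polyF (y i)))

/-- `y 1, y 2, …` is a sequence of best approximations related to `Aᵀ`:
`1 = Y_1 < Y_2 < ⋯`, `M_1 > M_2 > ⋯`, and `M(x) ≥ M_k` for every nonzero polynomial
vector `x` with `‖x‖ < Y_{k+1}` (the value `y 0` is irrelevant). -/
def IsBestApproxSeq (A : Matrix (Fin n) (Fin m) (FF K))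
    (y : ℕ → Fin n → Polynomial K) : Prop :=
  pnorm (y 1) = 1 ∧
  (∀ k, 1 ≤ k → pnorm (y k) < pnorm (y (k + 1))) ∧
  (∀ k, 1 ≤ k → Mfun A (y (k + 1)) < Mfun A (y k)) ∧
  (∀ k, 1 ≤ k → ∀ x : Fin n → Polynomial K, x ≠ 0 → pnorm x < pnorm (y (k + 1)) →
    Mfun A (y k) ≤ Mfun A x)

end Exponents

section Scalar

/-- The system `⟨ξ x - θ⟩ ≤ H^{-ω}`, `‖x‖ ≤ H` has a polynomial solution `x`. -/
def sSolv (ξ θ : FF K) (ω H : ℝ) : Prop :=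
  ∃ x : Polynomial K, sdist (ξ * polyF x - θ) ≤ H ^ (-ω) ∧ fnorm (polyF x) ≤ H

/-- The scalar inhomogeneous exponent `ω((ξ), θ)`. -/
def somegaInhom (ξ θ : FF K) : ℝ≥0∞ :=
  ⨆ (ω : ℝ) (_ : ∀ H₀ : ℝ, ∃ H : ℝ, H₀ ≤ H ∧ sSolv ξ θ ω H), ENNReal.ofReal ω

/-- The scalar uniform inhomogeneous exponent `ω̂((ξ), θ)`. -/
def somegaHatInhom (ξ θ : FF K) : ℝ≥0∞ :=
  ⨆ (ω : ℝ) (_ : ∃ H₀ : ℝ, ∀ H : ℝ, H₀ ≤ H → sSolv ξ θ ω H), ENNReal.ofReal ω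

/-- The scalar homogeneous exponent `ω((ξ))`. -/
def somegaHom (ξ : FF K) : ℝ≥0∞ :=
  ⨆ (ω : ℝ) (_ : ∀ H₀ : ℝ, ∃ H : ℝ, H₀ ≤ H ∧ ∃ x : Polynomial K, x ≠ 0 ∧
      sdist (ξ * polyF x) ≤ H ^ (-ω) ∧ fnorm (polyF x) ≤ H), ENNReal.ofReal ω

/-- `liminf_{x ∈ 𝔽_q[z], ‖x‖ → ∞} ‖x‖ ⟨α x - θ⟩`, computed in `[0, ∞]`. -/
def sBadLiminf (α θ : FF K) : ℝ≥0∞ :=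
  Filter.liminf
    (fun x : Polynomial K => ENNReal.ofReal (fnorm (polyF x) * sdist (α * polyF x - θ)))
    (Filter.comap (fun x : Polynomial K => fnorm (polyF x)) Filter.atTop)

/-- The set `Bad^ε(α)` of `θ ∈ 𝕀` with `liminf_{‖x‖ → ∞} ‖x‖ ⟨α x - θ⟩ ≥ ε`. -/
def sBad (α : FF K) (ε : ℝ) : Set (FF K) :=
  {θ | fnorm θ < 1 ∧ ENNReal.ofReal ε ≤ sBadLiminf α θ}

end Scalar

section CF

/-- The Gauss map `T x = 1/x - [1/x]` on `𝔽_q((z⁻¹))`. -/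
def gaussMap (x : FF K) : FF K := fracPart x⁻¹

/-- `pquot α k` is the `(k+1)`-st partial quotient `A_{k+1} = [1 / T^k α]` of the
continued fraction expansion of `α`. -/
def pquot (α : FF K) (k : ℕ) : Polynomial K := intPoly ((gaussMap^[k] α)⁻¹)

/-- `cfQ α k` is the denominator `Q_k` of the `k`-th convergent of the continued fraction
expansion of `α`: `Q_0 = 1`, `Q_1 = A_1`, `Q_{k+2} = A_{k+2} Q_{k+1} + Q_k`. -/
def cfQ (α : FF K) : ℕ → Polynomial K
  | 0 => 1
  | 1 => pquot α 0
  | (k + 2) => pquot α (k + 1) * cfQ α (k + 1) + cfQ α k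

/-- `α` is singular on average: for every `c > 0` the proportion of `l ∈ {1, …, N}` for
which `‖{Q α}‖ ≤ c 2^{-l}` has a solution `Q ∈ 𝔽_q[z]` with `0 < ‖Q‖ ≤ 2^l` tends to `1`
as `N → ∞`. -/
def SingularOnAverage (α : FF K) : Prop :=
  ∀ c : ℝ, 0 < c →
    Filter.Tendsto
      (fun N : ℕ =>
        (((Finset.Icc 1 N).filter (fun l : ℕ =>
            ∃ Q : Polynomial K, Q ≠ 0 ∧ fnorm (polyF Q) ≤ 2 ^ l ∧
              fnorm (fracPart (polyF Q * α)) ≤ c / 2 ^ l)).card : ℝ) / (N : ℝ))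
      Filter.atTop (nhds 1)

end CF

end FPSDA

open FPSDA MeasureTheory

namespace FPSDAaux

variable {K : Type*} [Field K] [Fintype K]

lemma toL_mul (x y : FF K) : toL (x * y) = toL x * toL y := rfl

lemma q_gt_one : (1 : ℝ) < (Fintype.card K : ℝ) := by
  exact_mod_cast Fintype.one_lt_card

lemma q_pos : (0 : ℝ) < (Fintype.card K : ℝ) := lt_trans one_pos q_gt_one

lemma fnorm_of_ne {x : FF K} (hx : x ≠ 0) :
    fnorm x = (Fintype.card K : ℝ) ^ (-(toL x).order) := by
  unfold fnorm
  rw [if_neg (show toL x ≠ 0 from hx)]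

lemma fnorm_mul (x y : FF K) : fnorm (x * y) = fnorm x * fnorm y := by
  by_cases hx : x = 0
  · subst hx; rw [zero_mul, fnorm_eq_zero.mpr rfl, zero_mul]
  by_cases hy : y = 0
  · subst hy; rw [mul_zero, fnorm_eq_zero.mpr rfl, mul_zero]
  rw [fnorm_of_ne hx, fnorm_of_ne hy, fnorm_of_ne (mul_ne_zero hx hy), toL_mul,
    HahnSeries.order_mul (show toL x ≠ 0 from hx) (show toL y ≠ 0 from hy),
    ← zpow_add₀ q_pos.ne']
  congr 1; ring

/-- small norm iff low coefficients vanish -/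
lemma fnorm_le_iff (x : FF K) (n : ℤ) :
    fnorm x ≤ (Fintype.card K : ℝ) ^ (-n) ↔ ∀ i < n, (toL x).coeff i = 0 := by
  by_cases hx : x = 0
  · subst hx
    rw [fnorm_eq_zero.mpr rfl]
    simp only [toL_zero, HahnSeries.coeff_zero, implies_true, iff_true]
    exact zpow_nonneg q_pos.le _
  · rw [fnorm_of_ne hx, zpow_le_zpow_iff_right₀ q_gt_one, neg_le_neg_iff,
      HahnSeries.le_order_iff_forall (show toL x ≠ 0 from hx)]

lemma fnorm_lt_one_iff (x : FF K) :
    fnorm x < 1 ↔ ∀ i ≤ 0, (toL x).coeff i = 0 := by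
  have h := fnorm_le_iff x 1
  have h2 : (∀ i < (1:ℤ), (toL x).coeff i = 0) ↔ ∀ i ≤ (0:ℤ), (toL x).coeff i = 0 := by
    constructor
    · intro h i hi; exact h i (by omega)
    · intro h i hi; exact h i (by omega)
  rw [← h2, ← h]
  by_cases hx : x = 0
  · subst hx
    rw [fnorm_eq_zero.mpr rfl]
    exact ⟨fun _ => zpow_nonneg q_pos.le _, fun _ => one_pos⟩
  · rw [fnorm_of_ne hx, zpow_le_zpow_iff_right₀ q_gt_one, ← zpow_zero (Fintype.card K : ℝ),
      zpow_lt_zpow_iff_right₀ q_gt_one]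
    omega

lemma fnorm_ge_of_coeff {x : FF K} {i : ℤ} (h : (toL x).coeff i ≠ 0) :
    (Fintype.card K : ℝ) ^ (-i) ≤ fnorm x := by
  have hx : x ≠ 0 := by
    rintro rfl; exact h rfl
  rw [fnorm_of_ne hx, zpow_le_zpow_iff_right₀ q_gt_one, neg_le_neg_iff]
  exact HahnSeries.order_le_of_coeff_ne_zero h

lemma polyF_add (P Q : Polynomial K) : polyF (P + Q) = polyF P + polyF Q :=
  map_add (Polynomial.aeval (R := K) (HahnSeries.single (-1 : ℤ) (1 : K))) P Q
lemma polyF_sub (P Q : Polynomial K) : polyF (P - Q) = polyF P - polyF Q :=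
  map_sub (Polynomial.aeval (R := K) (HahnSeries.single (-1 : ℤ) (1 : K))) P Q
lemma polyF_mul (P Q : Polynomial K) : polyF (P * Q) = polyF P * polyF Q :=
  map_mul (Polynomial.aeval (R := K) (HahnSeries.single (-1 : ℤ) (1 : K))) P Q
lemma polyF_one : polyF (1 : Polynomial K) = 1 :=
  map_one (Polynomial.aeval (R := K) (HahnSeries.single (-1 : ℤ) (1 : K)))
lemma polyF_zero : polyF (0 : Polynomial K) = 0 :=
  map_zero (Polynomial.aeval (R := K) (HahnSeries.single (-1 : ℤ) (1 : K)))

lemma polyF_monomial (n : ℕ) (a : K) :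
    toL (polyF (Polynomial.monomial n a)) = HahnSeries.single (-(n:ℤ)) a := by
  unfold polyF toL
  rw [Polynomial.aeval_monomial, HahnSeries.single_pow]
  have h : algebraMap K (HahnSeries ℤ K) a = HahnSeries.single 0 a := by
    rw [HahnSeries.algebraMap_apply', PowerSeries.algebraMap_apply, HahnSeries.ofPowerSeries_C]
    rfl
  rw [h, HahnSeries.single_mul_single]
  simp

lemma polyF_sum {ι : Type*} (s : Finset ι) (f : ι → Polynomial K) :
    polyF (∑ i ∈ s, f i) = ∑ i ∈ s, polyF (f i) :=
  map_sum (Polynomial.aeval (R := K) (HahnSeries.single (-1 : ℤ) (1 : K))) f s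

lemma coeff_sum {ι : Type*} (s : Finset ι) (f : ι → FF K) (j : ℤ) :
    (toL (∑ i ∈ s, f i)).coeff j = ∑ i ∈ s, (toL (f i)).coeff j := by
  classical
  induction s using Finset.induction_on with
  | empty => simp
  | insert a s ha ih => rw [Finset.sum_insert ha, Finset.sum_insert ha, toL_add,
      HahnSeries.coeff_add, ih]

/-- coefficient of polynomial times series -/
lemma coeff_polyF_mul (P : Polynomial K) (x : FF K) (j : ℤ) :
    (toL (polyF P * x)).coeff j =
      ∑ i ∈ Finset.range (P.natDegree + 1), P.coeff i * (toL x).coeff (j + i) := by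
  conv_lhs => rw [P.as_sum_range, polyF_sum, Finset.sum_mul]
  rw [coeff_sum]
  refine Finset.sum_congr rfl fun i _ => ?_
  rw [toL_mul, polyF_monomial, HahnSeries.coeff_single_mul]
  simp

lemma coeff_polyF (P : Polynomial K) (j : ℤ) :
    (toL (polyF P)).coeff j = if j ≤ 0 then P.coeff (-j).toNat else 0 := by
  conv_lhs => rw [P.as_sum_range, polyF_sum]
  rw [coeff_sum]
  simp only [polyF_monomial, HahnSeries.coeff_single]
  split_ifs with h
  · by_cases h2 : (-j).toNat < P.natDegree + 1
    · rw [Finset.sum_eq_single (-j).toNat]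
      · rw [if_pos (by omega)]
      · intro b _ hb
        rw [if_neg (by omega)]
      · intro hh; simp at hh; omega
    · rw [Polynomial.coeff_eq_zero_of_natDegree_lt (by omega)]
      refine Finset.sum_eq_zero fun b hb => ?_
      simp at hb
      rw [if_neg (by omega)]
  · refine Finset.sum_eq_zero fun b hb => ?_
    rw [if_neg (by omega)]

lemma coeff_polyF_one (P : Polynomial K) : (toL (polyF P)).coeff 1 = 0 := by
  rw [coeff_polyF, if_neg (by norm_num)]

lemma fnorm_polyF {P : Polynomial K} (hP : P ≠ 0) :
    fnorm (polyF P) = (Fintype.card K : ℝ) ^ (P.natDegree : ℤ) := by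
  apply le_antisymm
  · have := (fnorm_le_iff (polyF P) (-(P.natDegree : ℤ))).2 (by
      intro i hi
      rw [coeff_polyF]
      split_ifs
      · exact Polynomial.coeff_eq_zero_of_natDegree_lt (by omega)
      · rfl)
    simpa using this
  · have := fnorm_ge_of_coeff (x := polyF P) (i := -(P.natDegree : ℤ)) (by
      rw [coeff_polyF, if_pos (by omega)]
      simpa using hP)
    simpa using this

lemma polyF_ne_zero {P : Polynomial K} (hP : P ≠ 0) : polyF P ≠ 0 := by
  intro h
  have := fnorm_polyF hP
  rw [h, fnorm_eq_zero.mpr rfl] at this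
  exact (zpow_pos q_pos _).ne this

lemma intPoly_coeff (x : FF K) (n : ℕ) : (intPoly x).coeff n = (toL x).coeff (-(n:ℤ)) := by
  unfold intPoly
  simp only [Polynomial.finsetSum_coeff, Polynomial.coeff_monomial]
  by_cases h : n < (-(toL x).order).toNat + 1
  · rw [Finset.sum_eq_single n]
    · simp
    · intro b _ hb; simp [hb]
    · intro hh; simp at hh; omega
  · rw [HahnSeries.coeff_eq_zero_of_lt_order (by omega)]
    refine Finset.sum_eq_zero fun b hb => ?_
    simp at hb
    rw [if_neg (by omega)]

lemma coeff_fracPart (x : FF K) (i : ℤ) :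
    (toL (fracPart x)).coeff i = if 1 ≤ i then (toL x).coeff i else 0 := rfl

lemma toL_ext {x y : FF K} (h : ∀ i, (toL x).coeff i = (toL y).coeff i) : x = y := by
  have : toL x = toL y := HahnSeries.ext (funext h)
  exact this

lemma int_add_frac (x : FF K) : polyF (intPoly x) + fracPart x = x := by
  apply toL_ext
  intro i
  rw [toL_add, HahnSeries.coeff_add, coeff_polyF, coeff_fracPart]
  split_ifs with h1 h2 h2
  · omega
  · rw [intPoly_coeff, add_zero]; congr 1; omega
  · rw [zero_add]
  · omega

lemma fnorm_fracPart (x : FF K) : fnorm (fracPart x) < 1 := by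
  rw [fnorm_lt_one_iff]
  intro i hi
  rw [coeff_fracPart, if_neg (by omega)]

lemma irr_ne_zero {x : FF K} (hx : FIrrational x) : x ≠ 0 := by
  rintro rfl
  apply hx 0 1 one_ne_zero
  rw [zero_mul, polyF_zero]

lemma irr_gauss {x : FF K} (hx : FIrrational x) : FIrrational (gaussMap x) := by
  intro P Q hQ h
  have hx0 := irr_ne_zero hx
  have h1 : gaussMap x = x⁻¹ - polyF (intPoly x⁻¹) :=
    eq_sub_of_add_eq' (int_add_frac x⁻¹)
  rw [h1] at h
  -- x * (P + A Q) = Q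
  have h2 : x * polyF (P + intPoly x⁻¹ * Q) = polyF Q := by
    rw [polyF_add, polyF_mul, ← h]
    field_simp
    ring
  by_cases h3 : P + intPoly x⁻¹ * Q = 0
  · rw [h3, polyF_zero, mul_zero] at h2
    exact polyF_ne_zero hQ h2.symm
  · exact hx _ _ h3 h2

lemma deg_int_inv {x : FF K} (hx : x ≠ 0) (h1 : fnorm x < 1) :
    0 < (intPoly x⁻¹).natDegree ∧
      fnorm x = (Fintype.card K : ℝ) ^ (-((intPoly x⁻¹).natDegree : ℤ)) := by
  have hxi : x⁻¹ ≠ 0 := inv_ne_zero hx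
  have hprod : fnorm x * fnorm x⁻¹ = 1 := by
    rw [← fnorm_mul, mul_inv_cancel₀ hx, ← polyF_one, fnorm_polyF one_ne_zero]; simp
  have hpos : 0 < fnorm x := lt_of_le_of_ne (fnorm_nonneg x) (fun h => hx (fnorm_eq_zero.1 h.symm))
  have hgt : 1 < fnorm x⁻¹ := by
    by_contra hc
    push Not at hc
    nlinarith [fnorm_nonneg x⁻¹]
  -- A ≠ 0
  have hfr := fnorm_fracPart x⁻¹
  have hdec := int_add_frac x⁻¹
  have hA : intPoly x⁻¹ ≠ 0 := by
    intro h0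
    rw [h0, polyF_zero, zero_add] at hdec
    rw [hdec] at hfr
    linarith
  have hAn := fnorm_polyF hA
  have hAge : 1 ≤ fnorm (polyF (intPoly x⁻¹)) := by
    rw [hAn]; exact one_le_zpow₀ q_gt_one.le (by omega)
  have hle : fnorm x⁻¹ ≤ fnorm (polyF (intPoly x⁻¹)) := by
    calc fnorm x⁻¹ = fnorm (polyF (intPoly x⁻¹) + fracPart x⁻¹) := by rw [hdec]
      _ ≤ _ := fnorm_add_le _ _
      _ ≤ _ := max_le le_rfl (by linarith)
  have hge : fnorm (polyF (intPoly x⁻¹)) ≤ fnorm x⁻¹ := by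
    calc fnorm (polyF (intPoly x⁻¹)) = fnorm (x⁻¹ + - fracPart x⁻¹) := by
          congr 1; rw [← sub_eq_add_neg]; exact eq_sub_of_add_eq hdec
      _ ≤ _ := fnorm_add_le _ _
      _ ≤ _ := max_le le_rfl (by rw [fnorm_neg]; linarith)
  have heq : fnorm x⁻¹ = (Fintype.card K : ℝ) ^ ((intPoly x⁻¹).natDegree : ℤ) := by
    rw [← hAn]; exact le_antisymm hle hge
  constructor
  · by_contra hc
    have : (intPoly x⁻¹).natDegree = 0 := by omega
    rw [this] at heq
    simp at heq
    linarith
  · rw [zpow_neg, ← heq]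
    exact eq_inv_of_mul_eq_one_left hprod

/-- Data for continued fractions. -/
lemma cf_data (α : FF K) (hα : fnorm α < 1) (hirr : FIrrational α) :
    (∀ k, (cfQ α (k+1)).natDegree = (pquot α k).natDegree + (cfQ α k).natDegree) ∧
    (∀ k, 0 < (pquot α k).natDegree) ∧
    (∀ k, cfQ α k ≠ 0) ∧
    (∀ k, ∃ P : Polynomial K, fnorm (polyF (cfQ α k) * α - polyF P) =
      (Fintype.card K : ℝ) ^ (-((cfQ α (k+1)).natDegree : ℤ))) := by
  have hirrk : ∀ k, FIrrational (gaussMap^[k] α) := by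
    intro k
    induction k with
    | zero => exact hirr
    | succ k ih => rw [Function.iterate_succ_apply']; exact irr_gauss ih
  have hn : ∀ k, fnorm (gaussMap^[k] α) < 1 := by
    intro k
    cases k with
    | zero => exact hα
    | succ k => rw [Function.iterate_succ_apply']; exact fnorm_fracPart _
  have hk := fun k => deg_int_inv (irr_ne_zero (hirrk k)) (hn k)
  have hpos : ∀ k, 0 < (pquot α k).natDegree := fun k => (hk k).1
  have hp0 : ∀ k, pquot α k ≠ 0 := by
    intro k h; have := hpos k; rw [h] at this; simp at this
  have hQ : ∀ k, cfQ α k ≠ 0 ∧ cfQ α (k+1) ≠ 0 ∧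
      (cfQ α (k+1)).natDegree = (pquot α k).natDegree + (cfQ α k).natDegree := by
    intro k
    induction k with
    | zero =>
      refine ⟨by simp [cfQ], by simpa [cfQ] using hp0 0, by simp [cfQ]⟩
    | succ k ih =>
      obtain ⟨h1, h2, h3⟩ := ih
      have hm : (pquot α (k+1) * cfQ α (k+1)).natDegree
          = (pquot α (k+1)).natDegree + (cfQ α (k+1)).natDegree :=
        Polynomial.natDegree_mul (hp0 _) h2
      have hd : (cfQ α (k+2)).natDegree
          = (pquot α (k+1)).natDegree + (cfQ α (k+1)).natDegree := by
        rw [← hm]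
        show (pquot α (k+1) * cfQ α (k+1) + cfQ α k).natDegree = _
        apply Polynomial.natDegree_add_eq_left_of_natDegree_lt
        rw [hm, h3]
        have := hpos (k+1); have := hpos k; omega
      refine ⟨h2, ?_, hd⟩
      intro h
      have := hpos (k+1)
      rw [show cfQ α (k+1+1) = cfQ α (k+2) from rfl] at h
      rw [h] at hd
      simp at hd; omega
  refine ⟨fun k => (hQ k).2.2, hpos, fun k => (hQ k).1, ?_⟩
  have hg : ∀ k, polyF (pquot α k) + gaussMap^[k+1] α = (gaussMap^[k] α)⁻¹ := by
    intro k
    rw [Function.iterate_succ_apply']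
    exact int_add_frac _
  have hD : ∀ k, ∃ P P' : Polynomial K,
      polyF (cfQ α (k+1)) * α - polyF P' =
        -(gaussMap^[k+1] α) * (polyF (cfQ α k) * α - polyF P) ∧
      fnorm (polyF (cfQ α k) * α - polyF P) =
      (Fintype.card K : ℝ) ^ (-((cfQ α (k+1)).natDegree : ℤ)) := by
    intro k
    induction k with
    | zero =>
      refine ⟨0, 1, ?_, ?_⟩
      · have h0 := hg 0
        have hα0 := irr_ne_zero hirr
        simp only [Function.iterate_zero, id] at h0
        have : polyF (cfQ α (0+1)) = polyF (pquot α 0) := rfl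
        rw [this, show polyF (cfQ α 0) = 1 from polyF_one, polyF_one, polyF_zero,
          eq_sub_of_add_eq h0]
        field_simp
        ring
      · rw [show polyF (cfQ α 0) = 1 from polyF_one, polyF_zero, one_mul, sub_zero]
        exact (hk 0).2
    | succ k ih =>
      obtain ⟨P, P', h1, h2⟩ := ih
      refine ⟨P', pquot α (k+1) * P' + P, ?_, ?_⟩
      · have hne := irr_ne_zero (hirrk (k+1))
        have hgk := hg (k+1)
        have : polyF (cfQ α (k+1+1)) =
            polyF (pquot α (k+1)) * polyF (cfQ α (k+1)) + polyF (cfQ α k) := by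
          rw [← polyF_mul, ← polyF_add]; rfl
        rw [this, polyF_add, polyF_mul]
        have h3 : polyF (cfQ α k) * α - polyF P =
            - (gaussMap^[k+1] α)⁻¹ * (polyF (cfQ α (k+1)) * α - polyF P') := by
          rw [h1]; field_simp
        rw [← hgk] at h3
        linear_combination h3
      · rw [h1, fnorm_mul, fnorm_neg, h2, (hQ (k+1)).2.2, (hk (k+1)).2,
          ← zpow_add₀ q_pos.ne']
        congr 1
        show -((pquot α (k+1)).natDegree : ℤ) + _ = _
        push_cast
        ring
  intro k
  obtain ⟨P, _, _, h⟩ := hD k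
  exact ⟨P, h⟩

/-- The set of admissible `θ`. -/
def SS (α : FF K) : Set (FF K) :=
  {θ | fnorm θ < 1 ∧ ∀ k, (toL (polyF (cfQ α k) * θ)).coeff 1 ≠ 0}

lemma SS_subset (α : FF K) (hα : fnorm α < 1) (hirr : FIrrational α) (ε : ℝ)
    (hε : ε ≤ (Fintype.card K : ℝ) ^ (-2 : ℤ)) : SS α ⊆ sBad α ε := by
  obtain ⟨hd, hpos, hQ, hP⟩ := cf_data α hα hirr
  rintro θ ⟨h1, h2⟩
  refine ⟨h1, ?_⟩
  refine le_liminf_of_le (by isBoundedDefault) ?_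
  have hev : ∀ᶠ x : Polynomial K in Filter.comap (fun x : Polynomial K => fnorm (polyF x))
      Filter.atTop, 1 ≤ fnorm (polyF x) :=
    (Filter.eventually_ge_atTop (1:ℝ)).comap _
  filter_upwards [hev] with x hx
  apply ENNReal.ofReal_le_ofReal
  refine hε.trans ?_
  have hx0 : x ≠ 0 := by
    rintro rfl
    rw [polyF_zero, fnorm_eq_zero.mpr rfl] at hx
    linarith
  have hsm : StrictMono (fun k => (cfQ α k).natDegree) := by
    apply strictMono_nat_of_lt_succ
    intro k
    have := hd k; have := hpos k; omega
  obtain ⟨k, hk1, hk2⟩ : ∃ k, (cfQ α k).natDegree ≤ x.natDegree + 1 ∧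
      x.natDegree + 1 < (cfQ α (k+1)).natDegree := by
    have hex : ∃ k, x.natDegree + 1 < (cfQ α (k+1)).natDegree :=
      ⟨x.natDegree + 1, lt_of_lt_of_le (Nat.lt_succ_self _) (hsm.id_le _)⟩
    refine ⟨Nat.find hex, ?_, Nat.find_spec hex⟩
    rcases Nat.eq_zero_or_pos (Nat.find hex) with h0 | h0
    · rw [h0]; simp [cfQ]
    · have := Nat.find_min hex (m := Nat.find hex - 1) (by omega)
      rw [show Nat.find hex - 1 + 1 = Nat.find hex by omega] at this
      omega
  obtain ⟨P, hPk⟩ := hP k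
  have key : (Fintype.card K : ℝ) ^ (-1 - ((cfQ α k).natDegree : ℤ)) ≤
      sdist (α * polyF x - θ) := by
    refine le_ciInf fun y => ?_
    set w := α * polyF x - θ - polyF y with hw
    set Q := cfQ α k with hQdef
    have e : polyF Q * θ = (polyF Q * α - polyF P) * polyF x - polyF Q * w
        + polyF (P * x - Q * y) := by
      rw [polyF_sub, polyF_mul, polyF_mul, hw]; ring
    have c1 : (toL ((polyF Q * α - polyF P) * polyF x)).coeff 1 = 0 := by
      refine (fnorm_le_iff _ 2).1 ?_ 1 (by norm_num)
      rw [fnorm_mul, hPk, fnorm_polyF hx0, ← zpow_add₀ q_pos.ne']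
      exact zpow_le_zpow_right₀ one_le_q (by omega)
    have c2 : (toL (polyF Q * w)).coeff 1 ≠ 0 := by
      intro hc
      apply h2 k
      rw [← hQdef, e, toL_add, toL_sub, HahnSeries.coeff_add, HahnSeries.coeff_sub, c1, hc,
        coeff_polyF_one]
      simp
    have c3 := fnorm_ge_of_coeff c2
    rw [fnorm_mul, fnorm_polyF (hQ k)] at c3
    have hqp : (0:ℝ) < (Fintype.card K : ℝ) ^ ((Q.natDegree : ℤ)) := zpow_pos q_pos _
    rw [zpow_sub₀ q_pos.ne', div_le_iff₀ hqp, mul_comm]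
    exact c3
  rw [fnorm_polyF hx0]
  calc (Fintype.card K : ℝ) ^ (-2 : ℤ)
      ≤ (Fintype.card K : ℝ) ^ ((x.natDegree : ℤ) + (-1 - ((cfQ α k).natDegree : ℤ))) :=
        zpow_le_zpow_right₀ one_le_q (by omega)
    _ = (Fintype.card K : ℝ) ^ (x.natDegree : ℤ) *
        (Fintype.card K : ℝ) ^ (-1 - ((cfQ α k).natDegree : ℤ)) := zpow_add₀ q_pos.ne' _ _
    _ ≤ _ := mul_le_mul_of_nonneg_left key (zpow_nonneg q_pos.le _)

lemma dist_eq (x y : FF K) : dist x y = fnorm (x - y) := rfl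

lemma dimH_unit_le : dimH {θ : FF K | fnorm θ < 1} ≤ 1 := by
  have hq0 : (Fintype.card K : ℝ≥0∞) ≠ 0 := by
    simp
  have hqt : (Fintype.card K : ℝ≥0∞) ≠ ⊤ := ENNReal.natCast_ne_top _
  have hfin : Measure.hausdorffMeasure 1 {θ : FF K | fnorm θ < 1} ≤ 1 := by
    let t : ∀ n : ℕ, (Fin n → K) → Set (FF K) := fun n c =>
      {θ | fnorm θ < 1 ∧ ∀ i : Fin n, (toL θ).coeff ((i : ℕ) + 1 : ℤ) = c i}
    let r : ℕ → ℝ≥0∞ := fun n => ((Fintype.card K : ℝ≥0∞)⁻¹) ^ n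
    have hr : Tendsto r atTop (nhds 0) := by
      apply ENNReal.tendsto_pow_atTop_nhds_zero_of_lt_one
      rw [ENNReal.inv_lt_one]
      exact_mod_cast Fintype.one_lt_card
    have ht : ∀ n, ∀ i, Metric.ediam (t n i) ≤ r n := by
      intro n c
      apply Metric.ediam_le
      rintro x ⟨hx1, hx2⟩ y ⟨hy1, hy2⟩
      rw [edist_dist, dist_eq]
      have : fnorm (x - y) ≤ (Fintype.card K : ℝ) ^ (-(n:ℤ)) := by
        rw [fnorm_le_iff]
        intro i hi
        rw [toL_sub, HahnSeries.coeff_sub]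
        by_cases h0 : i ≤ 0
        · rw [(fnorm_lt_one_iff x).1 hx1 i h0, (fnorm_lt_one_iff y).1 hy1 i h0, sub_zero]
        · have hxi := hx2 ⟨(i-1).toNat, by omega⟩
          have hyi := hy2 ⟨(i-1).toNat, by omega⟩
          have e : (((i-1).toNat : ℕ) : ℤ) + 1 = i := by omega
          simp only [e] at hxi hyi
          rw [hxi, hyi, sub_self]
      refine (ENNReal.ofReal_le_ofReal this).trans ?_
      rw [zpow_neg, zpow_natCast, ENNReal.ofReal_inv_of_pos (pow_pos q_pos _),
        ENNReal.ofReal_pow q_pos.le, ENNReal.ofReal_natCast, ENNReal.inv_pow]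
    have hst : ∀ n, {θ : FF K | fnorm θ < 1} ⊆ ⋃ i, t n i := by
      intro n θ hθ
      rw [Set.mem_iUnion]
      exact ⟨fun i => (toL θ).coeff ((i : ℕ) + 1 : ℤ), hθ, fun i => rfl⟩
    refine (Measure.hausdorffMeasure_le_liminf_sum 1 _ r hr t (Eventually.of_forall ht)
      (Eventually.of_forall hst)).trans ?_
    have hle : ∀ n, ∑ i, Metric.ediam (t n i) ^ (1:ℝ) ≤ 1 := by
      intro n
      calc ∑ i, Metric.ediam (t n i) ^ (1:ℝ) ≤ ∑ i : Fin n → K, r n :=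
            Finset.sum_le_sum fun i _ => by rw [ENNReal.rpow_one]; exact ht n i
        _ = 1 := by
            rw [Finset.sum_const, Finset.card_univ, Fintype.card_fun, Fintype.card_fin,
              nsmul_eq_mul, Nat.cast_pow, ← mul_pow, ENNReal.mul_inv_cancel hq0 hqt, one_pow]
    calc _ ≤ liminf (fun _ : ℕ => (1:ℝ≥0∞)) atTop := liminf_le_liminf (Eventually.of_forall hle)
      _ = 1 := by simp
  have := dimH_le_of_hausdorffMeasure_ne_top (s := {θ : FF K | fnorm θ < 1}) (d := 1) (by
    rw [NNReal.coe_one]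
    exact (hfin.trans_lt ENNReal.one_lt_top).ne)
  simpa using this

lemma count_bound (d : ℕ → ℕ)
    (hg : Tendsto (fun k => d (k+1) - d k) atTop atTop) (m : ℕ) (hm : 1 ≤ m) :
    ∃ C : ℕ, ∀ M, m * M ≤ m * Nat.count (fun n => n ∉ Set.range d) M + M + C := by
  obtain ⟨k0, hk0⟩ := eventually_atTop.1 (hg.eventually_ge_atTop m)
  have h1 : ∀ k, m * k ≤ d k + m * k0 := by
    intro k
    induction k with
    | zero => simp
    | succ k ih =>
      by_cases h : k0 ≤ k
      · have := hk0 k h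
        rw [mul_add]; omega
      · have : m * (k+1) ≤ m * k0 := Nat.mul_le_mul_left _ (by omega)
        omega
  refine ⟨m * k0 + m, fun M => ?_⟩
  set L := (M + m * k0) / m + 1 with hL
  have hmL : m * L ≤ M + m * k0 + m := by
    rw [hL, mul_add, mul_one]
    have := Nat.mul_div_le (M + m * k0) m
    omega
  have hsub : (Finset.range M).filter (fun n => n ∈ Set.range d) ⊆ (Finset.range L).image d := by
    intro n hn
    rw [Finset.mem_filter, Finset.mem_range] at hn
    obtain ⟨hn, k, rfl⟩ := hn
    refine Finset.mem_image_of_mem d (Finset.mem_range.2 ?_)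
    rw [hL, Nat.lt_succ_iff, Nat.le_div_iff_mul_le (by omega), mul_comm]
    have := h1 k
    omega
  have hc := (Finset.card_le_card hsub).trans Finset.card_image_le
  rw [Finset.card_range] at hc
  have hs := Finset.card_filter_add_card_filter_not (s := Finset.range M) (fun n => n ∈ Set.range d)
  rw [Finset.card_range] at hs
  rw [Nat.count_eq_card_filter_range]
  have h3 := Nat.mul_le_mul_left m hc
  have h4 := congrArg (fun t => m * t) hs
  simp only [mul_add] at h4
  omega

lemma free_infinite (d : ℕ → ℕ)
    (hg : Tendsto (fun k => d (k+1) - d k) atTop atTop) :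
    (setOf (fun n => n ∉ Set.range d)).Infinite := by
  intro hfin
  obtain ⟨C, hC⟩ := count_bound d hg 2 (by norm_num)
  have h := hC (2 * hfin.toFinset.card + C + 1)
  have hle : Nat.count (fun n => n ∉ Set.range d) (2 * hfin.toFinset.card + C + 1)
      ≤ hfin.toFinset.card := by
    rw [Nat.count_eq_card_filter_range]
    apply Finset.card_le_card
    intro n hn
    rw [Finset.mem_filter] at hn
    rw [Set.Finite.mem_toFinset]
    exact hn.2
  omega

/-- Sequence defined by strong recursion. -/
def useq (g : ∀ n : ℕ, (Fin n → K) → K) : ℕ → K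
  | n => g n (fun j => useq g j.1)
termination_by n => n
decreasing_by exact j.2

lemma useq_eq (g : ∀ n : ℕ, (Fin n → K) → K) (n : ℕ) :
    useq g n = g n (fun j => useq g j.1) := by
  rw [useq]

/-- Series with prescribed digits. -/
def ofSeq (u : ℕ → K) : FF K :=
  HahnSeries.ofPowerSeries ℤ K (PowerSeries.mk (fun n => if n = 0 then 0 else u (n - 1)))

lemma coeff_ofSeq_succ (u : ℕ → K) (n : ℕ) : (toL (ofSeq u)).coeff ((n : ℤ) + 1) = u n := by
  have : (toL (ofSeq u)).coeff (((n + 1 : ℕ) : ℤ)) = u n := by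
    unfold toL ofSeq
    rw [HahnSeries.ofPowerSeries_apply_coeff, PowerSeries.coeff_mk]
    simp
  simpa using this

lemma fnorm_ofSeq (u : ℕ → K) : fnorm (ofSeq u) < 1 := by
  rw [fnorm_lt_one_iff]
  intro i hi
  unfold toL ofSeq
  rcases hi.lt_or_eq with h | h
  · have := PowerSeries.coeff_coe (PowerSeries.mk (fun n => if n = 0 then 0 else u (n - 1))) i
    rw [if_pos h] at this
    exact this
  · subst h
    have := HahnSeries.ofPowerSeries_apply_coeff (Γ := ℤ)
      (PowerSeries.mk (fun n => if n = 0 then 0 else u (n - 1))) 0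
    simpa using this

lemma exists_mem_SS (α : FF K) (hα : fnorm α < 1) (hirr : FIrrational α) (c : ℕ → K) :
    ∃ θ ∈ SS α, ∀ n, n ∉ Set.range (fun k => (cfQ α k).natDegree) →
      (toL θ).coeff ((n:ℤ) + 1) =
        c (Nat.count (fun n => n ∉ Set.range (fun k => (cfQ α k).natDegree)) n) := by
  obtain ⟨hd, hpos, hQ, hP⟩ := cf_data α hα hirr
  set d : ℕ → ℕ := fun k => (cfQ α k).natDegree with hdd
  have hsm : StrictMono d := by
    apply strictMono_nat_of_lt_succ
    intro k
    have h1 := hd k; have h2 := hpos k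
    simp only [hdd]
    omega
  let g : ∀ n : ℕ, (Fin n → K) → K := fun n prev =>
    if h : n ∈ Set.range d then
      (if ∑ j : Fin n, (cfQ α h.choose).coeff j * prev j = 0 then 1 else 0)
    else c (Nat.count (fun n => n ∉ Set.range d) n)
  refine ⟨ofSeq (useq g), ⟨fnorm_ofSeq _, ?_⟩, ?_⟩
  · intro k
    rw [coeff_polyF_mul, Finset.sum_range_succ]
    have hco : ∀ i : ℕ, (toL (ofSeq (useq g))).coeff (1 + (i:ℤ)) = useq g i := by
      intro i; rw [add_comm]; exact coeff_ofSeq_succ _ _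
    simp only [hco]
    have hmem : (cfQ α k).natDegree ∈ Set.range d := ⟨k, rfl⟩
    have hk : hmem.choose = k := hsm.injective hmem.choose_spec
    rw [useq_eq g (cfQ α k).natDegree]
    simp only [g]
    rw [dif_pos hmem, hk, ← Fin.sum_univ_eq_sum_range
      (fun i => (cfQ α k).coeff i * useq g i) (cfQ α k).natDegree]
    split_ifs with h0
    · rw [h0, zero_add, mul_one]
      simpa using hQ k
    · rw [mul_zero, add_zero]
      exact h0
  · intro n hn
    rw [coeff_ofSeq_succ, useq_eq]
    simp only [g]
    rw [dif_neg hn]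

/-- The map reading off free digits as a real number. -/
def fmap (α : FF K) (θ : FF K) : ℝ :=
  Real.ofDigits (fun i => Fintype.equivFin K ((toL θ).coeff
    ((Nat.nth (fun n => n ∉ Set.range (fun k => (cfQ α k).natDegree)) i : ℕ) + 1 : ℤ)))

lemma gaps (α : FF K) (hα : fnorm α < 1) (hirr : FIrrational α)
    (hdeg : Filter.Tendsto (fun k : ℕ => (pquot α k).natDegree) Filter.atTop Filter.atTop) :
    Tendsto (fun k => (cfQ α (k+1)).natDegree - (cfQ α k).natDegree) atTop atTop := by
  obtain ⟨hd, -⟩ := cf_data α hα hirr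
  refine hdeg.congr fun k => ?_
  rw [hd k]; omega

lemma fmap_surj (α : FF K) (hα : fnorm α < 1) (hirr : FIrrational α)
    (hdeg : Filter.Tendsto (fun k : ℕ => (pquot α k).natDegree) Filter.atTop Filter.atTop) :
    Set.Icc (0:ℝ) 1 ⊆ fmap α '' SS α := by
  intro y hy
  obtain ⟨a, -, rfl⟩ := Real.ofDigits_SurjOn (b := Fintype.card K) Fintype.one_lt_card hy
  obtain ⟨θ, hθ, h⟩ := exists_mem_SS α hα hirr (fun i => (Fintype.equivFin K).symm (a i))
  refine ⟨θ, hθ, ?_⟩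
  have hinf := free_infinite (fun k => (cfQ α k).natDegree) (gaps α hα hirr hdeg)
  unfold fmap
  congr 1
  funext i
  rw [h _ (Nat.nth_mem_of_infinite hinf i), Nat.count_nth_of_infinite hinf]
  simp

lemma fmap_holder (α : FF K) (hα : fnorm α < 1) (hirr : FIrrational α)
    (hdeg : Filter.Tendsto (fun k : ℕ => (pquot α k).natDegree) Filter.atTop Filter.atTop)
    (r : ℝ≥0) (hr : r < 1) (hr0 : 0 < r) : ∃ C, HolderOnWith C r (fmap α) (SS α) := by
  have hr' : (r:ℝ) < 1 := by exact_mod_cast hr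
  have hr0' : (0:ℝ) < r := by exact_mod_cast hr0
  obtain ⟨m, hm⟩ := exists_nat_ge (1 / (1 - (r:ℝ)))
  have hm1 : 1 ≤ (m:ℝ) * (1 - r) := by
    rwa [div_le_iff₀ (by linarith)] at hm
  have hm0 : (1:ℝ) ≤ m := by nlinarith [Nat.cast_nonneg (α := ℝ) m]
  obtain ⟨C, hC⟩ := count_bound (fun k => (cfQ α k).natDegree) (gaps α hα hirr hdeg) m
    (by exact_mod_cast hm0)
  have hqnn : (0:ℝ) ≤ (Fintype.card K : ℝ) ^ ((1 + C : ℕ) : ℝ) := Real.rpow_nonneg q_pos.le _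
  refine ⟨NNReal.mk ((Fintype.card K : ℝ) ^ ((1 + C : ℕ) : ℝ)) hqnn, ?_⟩
  intro x hx y hy
  by_cases hxy : x = y
  · subst hxy; simp
  have hne : x - y ≠ 0 := sub_ne_zero.2 hxy
  set N := (toL (x - y)).order with hN
  have hN1 : 1 ≤ N := by
    by_contra hc
    have := HahnSeries.coeff_order_eq_zero (x := toL (x - y))
    apply hne
    apply this.1
    rw [← hN, toL_sub, HahnSeries.coeff_sub, (fnorm_lt_one_iff x).1 hx.1 N (by omega),
      (fnorm_lt_one_iff y).1 hy.1 N (by omega), sub_zero]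
  obtain ⟨M, hM⟩ : ∃ M : ℕ, N = M + 1 := ⟨(N-1).toNat, by omega⟩
  set p : ℕ → Prop := fun n => n ∉ Set.range (fun k => (cfQ α k).natDegree) with hp
  have hf : |fmap α x - fmap α y| ≤ ((Fintype.card K : ℝ) ^ (Nat.count p M))⁻¹ := by
    apply Real.abs_ofDigits_sub_ofDigits_le
    intro i hi
    have hlt := Nat.nth_lt_of_lt_count hi
    congr 1
    rw [← sub_eq_zero, ← HahnSeries.coeff_sub, ← toL_sub]
    apply HahnSeries.coeff_eq_zero_of_lt_order
    rw [← hN, hM]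
    have : ((Nat.nth p i : ℕ) : ℤ) < M := by exact_mod_cast hlt
    linarith
  have hCM : (m:ℝ) * M ≤ m * Nat.count p M + M + C := by exact_mod_cast hC M
  have hcnt : (r:ℝ) * M - C ≤ Nat.count p M := by
    have hMn : (0:ℝ) ≤ M := Nat.cast_nonneg _
    have hCn : (0:ℝ) ≤ C := Nat.cast_nonneg _
    have h1 : (m:ℝ) * (r * M - C) ≤ m * Nat.count p M := by
      nlinarith [mul_le_mul_of_nonneg_right hm1 hMn, mul_le_mul_of_nonneg_right hm0 hCn]
    exact le_of_mul_le_mul_left h1 (by linarith)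
  have hd : dist x y = (Fintype.card K : ℝ) ^ (-((M:ℝ) + 1)) := by
    rw [dist_eq, fnorm_of_ne hne, ← hN, hM, ← Real.rpow_intCast]
    push_cast; rfl
  rw [edist_dist, edist_dist, ENNReal.ofReal_rpow_of_nonneg dist_nonneg hr0'.le,
    ← ENNReal.ofReal_eq_coe_nnreal hqnn, ← ENNReal.ofReal_mul hqnn]
  apply ENNReal.ofReal_le_ofReal
  rw [Real.dist_eq]
  refine hf.trans ?_
  rw [hd, ← Real.rpow_mul q_pos.le, ← Real.rpow_add q_pos, ← Real.rpow_natCast,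
    ← Real.rpow_neg q_pos.le]
  apply Real.rpow_le_rpow_of_exponent_le one_le_q
  push_cast
  nlinarith

lemma one_le_dimH_SS (α : FF K) (hα : fnorm α < 1) (hirr : FIrrational α)
    (hdeg : Filter.Tendsto (fun k : ℕ => (pquot α k).natDegree) Filter.atTop Filter.atTop) :
    1 ≤ dimH (SS α) := by
  apply ENNReal.le_of_forall_nnreal_lt
  intro r hr
  have hr1 : r < 1 := by exact_mod_cast hr
  rcases eq_or_ne r 0 with h0 | h0
  · simp [h0]
  have hr0 : 0 < r := pos_iff_ne_zero.2 h0
  obtain ⟨C, hC⟩ := fmap_holder α hα hirr hdeg r hr1 hr0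
  have h1 := hC.dimH_image_le hr0
  have h2 := dimH_mono (fmap_surj α hα hirr hdeg)
  have h3 : dimH (Set.Icc (0:ℝ) 1) = 1 := by
    rw [Real.dimH_of_nonempty_interior (by rw [interior_Icc]; exact ⟨1/2, by norm_num⟩)]
    simp
  rw [h3] at h2
  have h4 := h2.trans h1
  rw [ENNReal.le_div_iff_mul_le (Or.inl (by exact_mod_cast h0)) (Or.inl ENNReal.coe_ne_top),
    one_mul] at h4
  exact h4

end FPSDAaux

/-- If `α ∈ 𝕀` is irrational and the degrees of its partial quotients tend to infinity,
then `Bad^ε(α)` has Hausdorff dimension `1` for every `0 < ε ≤ q^{-2}`. -/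
theorem dimH_sBad_of_pquot_degrees {K : Type*} [Field K] [Fintype K]
    (α : FF K) (hα : fnorm α < 1) (hirr : FIrrational α)
    (hdeg : Filter.Tendsto (fun k : ℕ => (pquot α k).natDegree) Filter.atTop Filter.atTop) :
    ∀ ε : ℝ, 0 < ε → ε ≤ (Fintype.card K : ℝ) ^ (-2 : ℤ) → dimH (sBad α ε) = 1 := by
  intro ε _ hε
  apply le_antisymm
  · exact (dimH_mono (fun θ hθ => hθ.1)).trans FPSDAaux.dimH_unit_le
  · exact (FPSDAaux.one_le_dimH_SS α hα hirr hdeg).trans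
      (dimH_mono (FPSDAaux.SS_subset α hα hirr ε hε))
end
end

section
/- Let α ∈ 𝕀 be an irrational power series and (Q_k)_{k≥1} the denominators of its continued fraction convergents. Then there exists ε > 0 such that Bad^ε(α) has Hausdorff dimension 1 if and only if lim_{k→∞} ‖Q_k‖^{1/k} = ∞. -/
/-!
Common setup: the field `𝔽_q((z⁻¹))` of formal power series over a finite field `K` of
cardinality `q`, modeled as the field `FF K` of formal Laurent series in `t = z⁻¹`,
together with its non-Archimedean norm, the embedding of the polynomial ring `𝔽_q[z]`,
distances to polynomial (vectors), Diophantine exponents, `Bad` sets, continued fractions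
and best approximation sequences.
-/

open scoped Classical ENNReal NNReal
open Filter

noncomputable section

set_option linter.unusedSectionVars false

open FPSDA MeasureTheory
namespace FPSDA

section Aux

variable {K : Type*} [Field K] [Fintype K]

/-- the cardinality of the field as a real number -/
abbrev qK (K : Type*) [Fintype K] : ℝ := (Fintype.card K : ℝ)

lemma one_lt_qK : 1 < qK K := by
  unfold qK
  exact_mod_cast Fintype.one_lt_card

lemma qK_pos : 0 < qK K := lt_trans one_pos one_lt_qK

lemma qK_ne : qK K ≠ 0 := qK_pos.ne'

lemma fnorm_of_ne {x : FF K} (hx : x ≠ 0) : fnorm x = qK K ^ (-(toL x).order) := by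
  unfold fnorm
  rw [if_neg (show toL x ≠ 0 from hx)]

lemma fnorm_zero : fnorm (0 : FF K) = 0 := fnorm_eq_zero.mpr rfl

lemma toL_mul (x y : FF K) : toL (x * y) = toL x * toL y := rfl

lemma fnorm_mul (x y : FF K) : fnorm (x * y) = fnorm x * fnorm y := by
  by_cases hx : x = 0
  · simp [hx, fnorm_zero]
  by_cases hy : y = 0
  · simp [hy, fnorm_zero]
  rw [fnorm_of_ne hx, fnorm_of_ne hy, fnorm_of_ne (mul_ne_zero hx hy), toL_mul,
    HahnSeries.order_mul (show toL x ≠ 0 from hx) (show toL y ≠ 0 from hy), neg_add,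
    zpow_add₀ qK_ne]

lemma fnorm_one : fnorm (1 : FF K) = 1 := by
  have h := fnorm_mul (1 : FF K) 1
  rw [mul_one] at h
  have h2 : fnorm (1 : FF K) ≠ 0 := fun h => one_ne_zero (fnorm_eq_zero.mp h)
  field_simp at h
  exact h.symm

lemma fnorm_inv (x : FF K) : fnorm x⁻¹ = (fnorm x)⁻¹ := by
  by_cases hx : x = 0
  · simp [hx, fnorm_zero]
  have h := fnorm_mul x x⁻¹
  rw [mul_inv_cancel₀ hx, fnorm_one] at h
  exact (inv_eq_of_mul_eq_one_right h.symm).symm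

lemma fnorm_sub_le (x y : FF K) : fnorm (x - y) ≤ max (fnorm x) (fnorm y) := by
  rw [sub_eq_add_neg, ← fnorm_neg y]
  exact fnorm_add_le _ _

lemma fnorm_sub_comm (x y : FF K) : fnorm (x - y) = fnorm (y - x) := by
  rw [← fnorm_neg, neg_sub]

lemma fnorm_le_iff {x : FF K} {m : ℤ} :
    fnorm x ≤ qK K ^ (-m) ↔ ∀ i < m, (toL x).coeff i = 0 := by
  by_cases hx : x = 0
  · subst hx
    simp [fnorm_zero, zpow_nonneg qK_pos.le]
  rw [fnorm_of_ne hx, zpow_le_zpow_iff_right₀ one_lt_qK, neg_le_neg_iff,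
    HahnSeries.le_order_iff_forall (show toL x ≠ 0 from hx)]

/-- discreteness of the norm -/
lemma fnorm_le_of_lt {x : FF K} {m : ℤ} (h : fnorm x < qK K ^ (m + 1)) :
    fnorm x ≤ qK K ^ m := by
  by_cases hx : x = 0
  · subst hx
    rw [fnorm_zero]; exact zpow_nonneg qK_pos.le _
  rw [fnorm_of_ne hx] at h ⊢
  rw [zpow_lt_zpow_iff_right₀ one_lt_qK] at h
  exact zpow_le_zpow_right₀ one_lt_qK.le (by omega)

lemma coeff_one_eq_zero {x : FF K} (h : fnorm x ≤ qK K ^ (-2 : ℤ)) : (toL x).coeff 1 = 0 :=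
  fnorm_le_iff.mp h 1 (by norm_num)

lemma coeff_one_ne_zero {x : FF K} (h : fnorm x = qK K ^ (-1 : ℤ)) : (toL x).coeff 1 ≠ 0 := by
  have hx : x ≠ 0 := by
    rintro rfl
    rw [fnorm_zero] at h
    exact (zpow_pos qK_pos _).ne h
  rw [fnorm_of_ne hx] at h
  have h2 := zpow_right_injective₀ qK_pos one_lt_qK.ne' h
  have h3 : (toL x).order = 1 := by simpa using h2
  rw [← h3]
  exact fun hc => hx (HahnSeries.coeff_order_eq_zero.mp hc)

lemma polyF_add (P Q : Polynomial K) : polyF (P + Q) = polyF P + polyF Q :=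
  map_add (Polynomial.aeval (HahnSeries.single (-1 : ℤ) (1 : K))) P Q

lemma polyF_sub (P Q : Polynomial K) : polyF (P - Q) = polyF P - polyF Q :=
  map_sub (Polynomial.aeval (HahnSeries.single (-1 : ℤ) (1 : K))) P Q

lemma polyF_mul (P Q : Polynomial K) : polyF (P * Q) = polyF P * polyF Q :=
  map_mul (Polynomial.aeval (HahnSeries.single (-1 : ℤ) (1 : K))) P Q

lemma polyF_zero : polyF (0 : Polynomial K) = 0 :=
  map_zero (Polynomial.aeval (HahnSeries.single (-1 : ℤ) (1 : K)))

lemma polyF_one : polyF (1 : Polynomial K) = 1 :=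
  map_one (Polynomial.aeval (HahnSeries.single (-1 : ℤ) (1 : K)))

lemma toL_polyF_monomial (n : ℕ) (c : K) :
    toL (polyF (Polynomial.monomial n c)) = HahnSeries.single (-(n : ℤ)) c := by
  show Polynomial.aeval (HahnSeries.single (-1 : ℤ) (1 : K)) (Polynomial.monomial n c) = _
  rw [Polynomial.aeval_monomial, HahnSeries.single_pow]
  rw [HahnSeries.algebraMap_apply']
  simp [PowerSeries.algebraMap_apply, HahnSeries.C_apply, HahnSeries.single_mul_single]

lemma coeff_polyF (P : Polynomial K) (i : ℤ) :
    (toL (polyF P)).coeff i = if i ≤ 0 then P.coeff (-i).toNat else 0 := by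
  induction P using Polynomial.induction_on' with
  | add P Q hP hQ =>
    rw [polyF_add, toL_add, HahnSeries.coeff_add, hP, hQ]
    split_ifs <;> simp
  | monomial n c =>
    rw [toL_polyF_monomial, HahnSeries.coeff_single, Polynomial.coeff_monomial]
    by_cases h : i = -(n : ℤ)
    · subst h; simp
    · rw [if_neg h]
      split_ifs with h1 h2
      · omega
      · rfl
      · rfl

lemma polyF_ne_zero {P : Polynomial K} (hP : P ≠ 0) : polyF P ≠ 0 := by
  intro h
  have h1 := coeff_polyF P (-(P.natDegree : ℤ))
  rw [h] at h1
  simp at h1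
  exact hP (Polynomial.leadingCoeff_eq_zero.mp h1.symm)

lemma fnorm_polyF {P : Polynomial K} (hP : P ≠ 0) :
    fnorm (polyF P) = qK K ^ (P.natDegree : ℤ) := by
  have h0 := polyF_ne_zero hP
  rw [fnorm_of_ne h0]
  congr 1
  have h1 : (toL (polyF P)).order ≤ -(P.natDegree : ℤ) := by
    apply HahnSeries.order_le_of_coeff_ne_zero
    rw [coeff_polyF]
    simpa using hP
  have h2 : -(P.natDegree : ℤ) ≤ (toL (polyF P)).order := by
    rw [HahnSeries.le_order_iff_forall (show toL (polyF P) ≠ 0 from h0)]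
    intro i hi
    rw [coeff_polyF]
    split_ifs
    · apply Polynomial.coeff_eq_zero_of_natDegree_lt
      omega
    · rfl
  omega

lemma coeff_intPoly (x : FF K) (i : ℕ) :
    (intPoly x).coeff i = (toL x).coeff (-(i : ℤ)) := by
  unfold intPoly
  rw [Polynomial.finsetSum_coeff]
  simp only [Polynomial.coeff_monomial]
  rw [Finset.sum_ite_eq' ]
  split_ifs with h
  · rfl
  · symm
    apply HahnSeries.coeff_eq_zero_of_lt_order
    simp at h
    omega

lemma coeff_fracPart (x : FF K) (i : ℤ) :
    (toL (fracPart x)).coeff i = if 1 ≤ i then (toL x).coeff i else 0 := rfl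

lemma sub_intPoly (x : FF K) : x - polyF (intPoly x) = fracPart x := by
  show toL (x - polyF (intPoly x)) = toL (fracPart x)
  ext i
  rw [coeff_fracPart, toL_sub, HahnSeries.coeff_sub, coeff_polyF]
  split_ifs with h1 h2 h2
  · omega
  · rw [coeff_intPoly]
    have : -(((-i).toNat : ℕ) : ℤ) = i := by omega
    rw [this, sub_self]
  · simp
  · omega

lemma fnorm_fracPart (x : FF K) : fnorm (fracPart x) ≤ qK K ^ (-1 : ℤ) := by
  rw [fnorm_le_iff]
  intro i hi
  rw [coeff_fracPart, if_neg (by omega)]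

lemma fnorm_lt_one_iff {x : FF K} : fnorm x < 1 ↔ fnorm x ≤ qK K ^ (-1 : ℤ) := by
  constructor
  · intro h
    apply fnorm_le_of_lt
    simpa using h
  · intro h
    refine lt_of_le_of_lt h ?_
    rw [zpow_neg_one]
    exact inv_lt_one_of_one_lt₀ one_lt_qK

lemma sdist_le (x : FF K) (y : Polynomial K) : sdist x ≤ fnorm (x - polyF y) :=
  ciInf_le ⟨0, by rintro _ ⟨y, rfl⟩; exact fnorm_nonneg _⟩ y

lemma le_sdist {x : FF K} {c : ℝ} (h : ∀ y, c ≤ fnorm (x - polyF y)) : c ≤ sdist x :=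
  le_ciInf h

lemma fnorm_polyF_eq_zero {P : Polynomial K} : fnorm (polyF P) = 0 ↔ P = 0 := by
  constructor
  · intro h
    by_contra hP
    exact polyF_ne_zero hP (fnorm_eq_zero.mp h)
  · rintro rfl
    rw [polyF_zero, fnorm_zero]

end Aux

end FPSDA
namespace FPSDA

section Aux

variable {K : Type*} [Field K] [Fintype K]

/-- continued fraction data for `α` -/
structure CFD (α : FF K) where
  Q : ℕ → Polynomial K
  Q_ne : ∀ k, Q k ≠ 0
  D : ℕ → ℕ
  hD : ∀ k, (Q k).natDegree = D k
  D_zero : D 0 = 0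
  D_mono : StrictMono D
  δ : ℕ → FF K
  hδ : ∀ k, ∃ P, α * polyF (Q k) - δ k = polyF P
  nδ : ∀ k, fnorm (δ k) = qK K ^ (-(D (k + 1) : ℤ))

namespace CFD

variable {α : FF K} (c : CFD α)

lemma exists_blk (n : ℕ) : ∃ k, n < c.D (k + 1) :=
  ⟨n, lt_of_lt_of_le (Nat.lt_succ_self n) (c.D_mono.le_apply)⟩

/-- block index -/
def blk (n : ℕ) : ℕ := Nat.find (c.exists_blk n)

lemma lt_blk (n : ℕ) : n < c.D (c.blk n + 1) := Nat.find_spec (c.exists_blk n)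

lemma blk_le (n : ℕ) : c.D (c.blk n) ≤ n := by
  rcases h : c.blk n with _ | k
  · rw [c.D_zero]; exact Nat.zero_le _
  · have := Nat.find_min (c.exists_blk n) (m := k) (by
      have : c.blk n = Nat.find (c.exists_blk n) := rfl
      omega)
    omega

lemma blk_eq {n k : ℕ} (h1 : c.D k ≤ n) (h2 : n < c.D (k + 1)) : c.blk n = k := by
  have h3 := c.lt_blk n
  have h4 := c.blk_le n
  have h5 : k < c.blk n + 1 := c.D_mono.lt_iff_lt.mp (lt_of_le_of_lt h1 h3)
  have h6 : c.blk n < k + 1 := c.D_mono.lt_iff_lt.mp (lt_of_le_of_lt h4 h2)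
  omega

/-- the polynomial of degree `n` used for the `n`-th digit -/
def R (n : ℕ) : Polynomial K := Polynomial.X ^ (n - c.D (c.blk n)) * c.Q (c.blk n)

lemma R_ne (n : ℕ) : c.R n ≠ 0 :=
  mul_ne_zero (pow_ne_zero _ Polynomial.X_ne_zero) (c.Q_ne _)

lemma fnorm_R (n : ℕ) : fnorm (polyF (c.R n)) = qK K ^ (n : ℤ) := by
  rw [fnorm_polyF (c.R_ne n)]
  congr 2
  unfold R
  rw [Polynomial.natDegree_mul (pow_ne_zero _ Polynomial.X_ne_zero) (c.Q_ne _),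
    Polynomial.natDegree_X_pow, c.hD]
  have := c.blk_le n
  omega

/-- the `n`-th digit of `θ` -/
def dig (θ : FF K) (n : ℕ) : K := (toL (polyF (c.R n) * θ)).coeff 1

lemma dig_add (θ η : FF K) (n : ℕ) : c.dig (θ + η) n = c.dig θ n + c.dig η n := by
  unfold dig
  rw [mul_add, toL_add, HahnSeries.coeff_add]

lemma dig_sub (θ η : FF K) (n : ℕ) : c.dig (θ - η) n = c.dig θ n - c.dig η n := by
  unfold dig
  rw [mul_sub, toL_sub, HahnSeries.coeff_sub]

lemma dig_polyF (P : Polynomial K) (n : ℕ) : c.dig (polyF P) n = 0 := by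
  unfold dig
  rw [← polyF_mul, coeff_polyF]
  simp

lemma dig_zero (n : ℕ) : c.dig 0 n = 0 := by
  rw [← polyF_zero, dig_polyF]

lemma dig_eq_zero {θ : FF K} {n : ℕ} (h : fnorm θ ≤ qK K ^ (-((n : ℤ) + 2))) :
    c.dig θ n = 0 := by
  apply coeff_one_eq_zero
  rw [fnorm_mul, fnorm_R]
  calc qK K ^ (n : ℤ) * fnorm θ ≤ qK K ^ (n : ℤ) * qK K ^ (-((n : ℤ) + 2)) := by
        gcongr
    _ = qK K ^ (-2 : ℤ) := by
        rw [← zpow_add₀ qK_ne]; congr 1; ring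

lemma dig_ne_zero {θ : FF K} {n : ℕ} (h : fnorm θ = qK K ^ (-((n : ℤ) + 1))) :
    c.dig θ n ≠ 0 := by
  apply coeff_one_ne_zero
  rw [fnorm_mul, fnorm_R, h, ← zpow_add₀ qK_ne]
  congr 1; ring

lemma le_fnorm_of_dig {θ : FF K} {n : ℕ} (h : c.dig θ n ≠ 0) :
    qK K ^ (-((n : ℤ) + 1)) ≤ fnorm θ := by
  by_contra hc
  apply h
  apply c.dig_eq_zero
  apply fnorm_le_of_lt
  have : (-((n : ℤ) + 2) + 1) = (-((n : ℤ) + 1)) := by ring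
  rw [this]
  exact not_le.mp hc

lemma fnorm_le_of_dig {θ : FF K} (h0 : fnorm θ < 1) {N : ℕ} (h : ∀ n < N, c.dig θ n = 0) :
    fnorm θ ≤ qK K ^ (-((N : ℤ) + 1)) := by
  induction N with
  | zero => simpa using fnorm_lt_one_iff.mp h0
  | succ N ih =>
    have h1 := ih (fun n hn => h n (by omega))
    have h2 : fnorm θ ≠ qK K ^ (-((N : ℤ) + 1)) := fun hc =>
      c.dig_ne_zero hc (h N (by omega))
    apply fnorm_le_of_lt
    have : (-(((N + 1 : ℕ) : ℤ) + 1) + 1) = (-((N : ℤ) + 1)) := by push_cast; ring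
    rw [this]
    exact lt_of_le_of_ne h1 h2

lemma dig_alpha (x : Polynomial K) (n : ℕ) :
    c.dig (α * polyF x) n =
      (toL (polyF (Polynomial.X ^ (n - c.D (c.blk n))) * c.δ (c.blk n) * polyF x)).coeff 1 := by
  obtain ⟨P, hP⟩ := c.hδ (c.blk n)
  have h : polyF (c.R n) * (α * polyF x) =
      polyF (Polynomial.X ^ (n - c.D (c.blk n))) * c.δ (c.blk n) * polyF x +
        polyF (Polynomial.X ^ (n - c.D (c.blk n)) * P * x) := by
    unfold R
    rw [polyF_mul, polyF_mul, polyF_mul, ← hP]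
    ring
  unfold dig
  rw [h, toL_add, HahnSeries.coeff_add, coeff_polyF]
  simp

lemma fnorm_term {x : Polynomial K} (hx : x ≠ 0) (n : ℕ) :
    fnorm (polyF (Polynomial.X ^ (n - c.D (c.blk n))) * c.δ (c.blk n) * polyF x) =
      qK K ^ ((n : ℤ) - c.D (c.blk n) - c.D (c.blk n + 1) + x.natDegree) := by
  rw [fnorm_mul, fnorm_mul, fnorm_polyF hx, fnorm_polyF (pow_ne_zero _ Polynomial.X_ne_zero),
    Polynomial.natDegree_X_pow, c.nδ, ← zpow_add₀ qK_ne, ← zpow_add₀ qK_ne]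
  congr 1
  have := c.blk_le n
  omega

lemma dig_alpha_eq_zero {x : Polynomial K} {n : ℕ}
    (h : x ≠ 0 → (n : ℤ) - c.D (c.blk n) - c.D (c.blk n + 1) + x.natDegree ≤ -2) :
    c.dig (α * polyF x) n = 0 := by
  by_cases hx : x = 0
  · rw [hx, polyF_zero, mul_zero, dig_zero]
  rw [dig_alpha]
  apply coeff_one_eq_zero
  rw [c.fnorm_term hx]
  exact zpow_le_zpow_right₀ one_lt_qK.le (h hx)

lemma dig_alpha_ne_zero {x : Polynomial K} {n : ℕ} (hx : x ≠ 0)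
    (h : (n : ℤ) - c.D (c.blk n) - c.D (c.blk n + 1) + x.natDegree = -1) :
    c.dig (α * polyF x) n ≠ 0 := by
  rw [dig_alpha]
  apply coeff_one_ne_zero
  rw [c.fnorm_term hx, h]

lemma dig_alpha_high {x : Polynomial K} {n k : ℕ} (hx : x ≠ 0 → x.natDegree < c.D k)
    (hn : c.D k ≤ n) : c.dig (α * polyF x) n = 0 := by
  apply dig_alpha_eq_zero
  intro h0
  have h1 := hx h0
  have h2 := c.lt_blk n
  have h3 : k < c.blk n + 1 := c.D_mono.lt_iff_lt.mp (lt_of_le_of_lt hn h2)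
  have h4 : c.D k ≤ c.D (c.blk n) := c.D_mono.monotone (by omega)
  omega

lemma D_lt (k : ℕ) : c.D k < c.D (k + 1) := c.D_mono (Nat.lt_succ_self k)

lemma blk_D (k : ℕ) : c.blk (c.D k) = k := c.blk_eq le_rfl (c.D_lt k)

/-- sufficient condition for being badly approximable -/
lemma bad_of_dig {θ : FF K} (h : ∀ k, c.dig θ (c.D k) ≠ 0) {x : Polynomial K} (hx : x ≠ 0) :
    qK K ^ (-2 : ℤ) ≤ fnorm (polyF x) * sdist (α * polyF x - θ) := by
  have key : ∀ k : ℕ, c.dig (α * polyF x) (c.D k) = 0 → (c.D k : ℤ) ≤ x.natDegree + 1 →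
      qK K ^ (-2 : ℤ) ≤ fnorm (polyF x) * sdist (α * polyF x - θ) := by
    intro k h1 h2
    have h3 : qK K ^ (-((c.D k : ℤ) + 1)) ≤ sdist (α * polyF x - θ) := by
      apply le_sdist
      intro y
      apply c.le_fnorm_of_dig
      rw [dig_sub, dig_sub, dig_polyF, h1]
      simpa using h k
    rw [fnorm_polyF hx]
    calc qK K ^ (-2 : ℤ) ≤ qK K ^ ((x.natDegree : ℤ) + (-((c.D k : ℤ) + 1))) :=
          zpow_le_zpow_right₀ one_lt_qK.le (by omega)
      _ = qK K ^ (x.natDegree : ℤ) * qK K ^ (-((c.D k : ℤ) + 1)) := zpow_add₀ qK_ne _ _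
      _ ≤ _ := by
        gcongr
  have hl := c.lt_blk x.natDegree
  have hb := c.blk_le x.natDegree
  set j := c.blk x.natDegree with hj
  by_cases hc : x.natDegree + 1 < c.D (j + 1)
  · apply key j
    · apply dig_alpha_eq_zero
      intro _
      rw [blk_D]
      omega
    · omega
  · apply key (j + 1)
    · exact c.dig_alpha_high (fun _ => hl) le_rfl
    · omega

lemma dig_smul (a : K) (x : Polynomial K) (n : ℕ) :
    c.dig (α * polyF (a • x)) n = a * c.dig (α * polyF x) n := by
  have h : ∀ P : FF K, toL (polyF (Polynomial.C a) * P) = HahnSeries.single 0 a * toL P := by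
    intro P
    rw [toL_mul, ← Polynomial.monomial_zero_left, toL_polyF_monomial]
    simp
  unfold dig
  have e : polyF (c.R n) * (α * polyF (a • x)) =
      polyF (Polynomial.C a) * (polyF (c.R n) * (α * polyF x)) := by
    rw [Polynomial.smul_eq_C_mul, polyF_mul]; ring
  rw [e, h, HahnSeries.coeff_single_mul]
  simp

lemma exists_x (k : ℕ) (θ : FF K) : ∃ x : Polynomial K, (x ≠ 0 → x.natDegree < c.D k) ∧
    ∀ n < c.D k, c.dig (α * polyF x) n = c.dig θ n := by
  let f : Polynomial.degreeLT K (c.D k) →ₗ[K] (Fin (c.D k) → K) :=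
    { toFun := fun x n => c.dig (α * polyF (x : Polynomial K)) n
      map_add' := by
        intro x y
        ext n
        simp [polyF_add, mul_add, dig_add]
      map_smul' := by
        intro a x
        ext n
        simp [dig_smul] }
  have hdeg : ∀ x : Polynomial.degreeLT K (c.D k), (x : Polynomial K) ≠ 0 →
      (x : Polynomial K).natDegree < c.D k := by
    intro x hx
    have := Polynomial.mem_degreeLT.mp x.2
    rwa [Polynomial.natDegree_lt_iff_degree_lt hx]
  have hinj : Function.Injective f := by
    rw [← LinearMap.ker_eq_bot, LinearMap.ker_eq_bot']
    intro x hx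
    by_contra hne
    have hx0 : (x : Polynomial K) ≠ 0 := fun h => hne (Subtype.ext h)
    have h1 := hdeg x hx0
    set d := (x : Polynomial K).natDegree with hd
    have hl := c.lt_blk d
    have hb := c.blk_le d
    set j := c.blk d with hj
    have hjk : c.D (j + 1) ≤ c.D k := by
      apply c.D_mono.monotone
      have : j < k := c.D_mono.lt_iff_lt.mp (lt_of_le_of_lt hb h1)
      omega
    have hbn : c.blk (c.D j + (c.D (j + 1) - 1 - d)) = j := c.blk_eq (by omega) (by omega)
    have h2 := congrFun hx ⟨c.D j + (c.D (j + 1) - 1 - d), by omega⟩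
    refine c.dig_alpha_ne_zero hx0 ?_ h2
    rw [hbn]
    show ((c.D j + (c.D (j + 1) - 1 - d) : ℕ) : ℤ) - _ - _ + d = -1
    omega
  have hfr : Module.finrank K (Polynomial.degreeLT K (c.D k)) =
      Module.finrank K (Fin (c.D k) → K) :=
    (Polynomial.degreeLTEquiv K (c.D k)).finrank_eq
  have : FiniteDimensional K (Polynomial.degreeLT K (c.D k)) :=
    Module.Finite.equiv (Polynomial.degreeLTEquiv K (c.D k)).symm
  have hsurj := (LinearMap.injective_iff_surjective_of_finrank_eq_finrank hfr).mp hinj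
  obtain ⟨x, hx⟩ := hsurj (fun n => c.dig θ n)
  exact ⟨x, hdeg x, fun n hn => congrFun hx ⟨n, hn⟩⟩

/-- necessary condition for being badly approximable -/
lemma exists_good {θ : FF K} {k C : ℕ} (h1 : c.dig θ (c.D k) ≠ 0)
    (h2 : ∀ i < C, c.dig θ (c.D (k + 1) + i) = 0) :
    ∃ x : Polynomial K, fnorm (polyF x) = qK K ^ ((c.D (k + 1) : ℤ) - 1) ∧
      sdist (α * polyF x - θ) ≤ qK K ^ (-((c.D (k + 1) : ℤ) + C + 1)) := by
  obtain ⟨x, hx, hd⟩ := c.exists_x (k + 1) θ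
  have h3 := hd (c.D k) (c.D_lt k)
  have hx0 : x ≠ 0 := by
    rintro rfl
    rw [polyF_zero, mul_zero, dig_zero] at h3
    exact h1 h3.symm
  have hxd : x.natDegree + 1 = c.D (k + 1) := by
    have h4 := hx hx0
    by_contra hne
    apply h1
    rw [← h3]
    apply dig_alpha_eq_zero
    intro _
    rw [blk_D]
    omega
  refine ⟨x, ?_, ?_⟩
  · rw [fnorm_polyF hx0]
    congr 1
    omega
  · refine le_trans (sdist_le _ (intPoly (α * polyF x - θ))) ?_
    have := c.fnorm_le_of_dig (θ := α * polyF x - θ - polyF (intPoly (α * polyF x - θ)))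
      (N := c.D (k + 1) + C) (by
        rw [sub_intPoly, fnorm_lt_one_iff]
        exact fnorm_fracPart _) (by
        intro n hn
        rw [dig_sub, dig_sub, dig_polyF]
        by_cases hnk : n < c.D (k + 1)
        · rw [hd n hnk]; simp
        · rw [c.dig_alpha_high hx (by omega)]
          have := h2 (n - c.D (k + 1)) (by omega)
          rw [show c.D (k + 1) + (n - c.D (k + 1)) = n by omega] at this
          rw [this]; simp)
    simpa using this

end CFD

end Aux

end FPSDA
namespace FPSDA

section Aux

variable {K : Type*} [Field K] [Fintype K]

namespace CFD

variable {α : FF K} (c : CFD α)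

/-- the monomial `a z^{-n}` -/
def mon (n : ℕ) (a : K) : FF K := (HahnSeries.single (n : ℤ) a : LaurentSeries K)

lemma coeff_mon (n : ℕ) (a : K) (i : ℤ) :
    (toL (mon n a)).coeff i = if i = n then a else 0 := by
  show (HahnSeries.single (n : ℤ) a).coeff i = _
  rw [HahnSeries.coeff_single]
  split_ifs <;> rfl

lemma dig_mon (n : ℕ) : ∃ l : K, l ≠ 0 ∧ ∀ a, c.dig (mon (n + 1) a) n = a * l := by
  have h : ∀ a, c.dig (mon (n + 1) a) n = a * (c.R n).coeff n := by
    intro a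
    unfold dig
    rw [mul_comm, toL_mul]
    show (HahnSeries.single ((n + 1 : ℕ) : ℤ) a * toL (polyF (c.R n))).coeff 1 = _
    rw [HahnSeries.coeff_single_mul, coeff_polyF, if_pos (by push_cast; omega)]
    congr 2
    push_cast
    omega
  refine ⟨_, ?_, h⟩
  have h1 : fnorm (mon (n + 1) (1 : K)) = qK K ^ (-((n : ℤ) + 1)) := by
    have h2 : toL (mon (n + 1) (1 : K)) = HahnSeries.single ((n + 1 : ℕ) : ℤ) 1 := rfl
    have h3 : mon (n + 1) (1 : K) ≠ 0 := by
      intro h0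
      have : toL (mon (n + 1) (1 : K)) = 0 := h0
      rw [h2] at this
      simp at this
    rw [fnorm_of_ne h3, h2, HahnSeries.order_single one_ne_zero]
    push_cast
    rfl
  have := c.dig_ne_zero h1
  rwa [h, one_mul] at this

/-- successive approximations to the point with prescribed digits -/
def appr (a : ℕ → K) : ℕ → FF K
  | 0 => 0
  | (n + 1) => appr a n +
      mon (n + 1) ((a n - c.dig (appr a n) n) / (c.dig_mon n).choose)

lemma dig_appr (a : ℕ → K) (n : ℕ) : c.dig (c.appr a (n + 1)) n = a n := by
  have h := (c.dig_mon n).choose_spec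
  rw [appr, dig_add, h.2, div_mul_cancel₀ _ h.1]
  ring

lemma coeff_appr (a : ℕ → K) (m : ℕ) (n : ℕ) (hmn : m ≤ n) :
    ∀ i : ℤ, i ≤ m → (toL (c.appr a n)).coeff i = (toL (c.appr a m)).coeff i := by
  intro i hi
  induction n, hmn using Nat.le_induction with
  | base => rfl
  | succ n hn ih =>
    rw [appr, toL_add, HahnSeries.coeff_add, ih, coeff_mon, if_neg (by push_cast; omega), add_zero]

lemma coeff_appr_nonpos (a : ℕ → K) (n : ℕ) (i : ℤ) (hi : i ≤ 0) :
    (toL (c.appr a n)).coeff i = 0 := by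
  rw [c.coeff_appr a 0 n (Nat.zero_le _) i (by simpa using hi)]
  rfl

lemma exists_dig (a : ℕ → K) : ∃ θ : FF K, fnorm θ < 1 ∧ ∀ n, c.dig θ n = a n := by
  let θ : FF K := ((PowerSeries.mk fun m : ℕ => (toL (c.appr a m)).coeff (m : ℤ) :
    PowerSeries K) : LaurentSeries K)
  have hθ : ∀ m : ℕ, (toL θ).coeff (m : ℤ) = (toL (c.appr a m)).coeff (m : ℤ) := by
    intro m
    show ((PowerSeries.mk fun m : ℕ => (toL (c.appr a m)).coeff (m : ℤ) :
      PowerSeries K) : LaurentSeries K).coeff (m : ℤ) = _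
    rw [LaurentSeries.coeff_coe_powerSeries, PowerSeries.coeff_mk]
  have hneg : ∀ i : ℤ, i < 0 → (toL θ).coeff i = 0 := by
    intro i hi
    show ((PowerSeries.mk fun m : ℕ => (toL (c.appr a m)).coeff (m : ℤ) :
      PowerSeries K) : LaurentSeries K).coeff i = 0
    rw [PowerSeries.coeff_coe, if_pos hi]
  have happ : ∀ N : ℕ, ∀ i : ℤ, i ≤ N → (toL θ).coeff i = (toL (c.appr a N)).coeff i := by
    intro N i hi
    by_cases h : i < 0
    · rw [hneg i h, c.coeff_appr_nonpos a N i h.le]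
    · obtain ⟨m, rfl⟩ := Int.eq_ofNat_of_zero_le (not_lt.mp h)
      rw [hθ, c.coeff_appr a m N (by exact_mod_cast hi) m le_rfl]
  refine ⟨θ, ?_, ?_⟩
  · rw [fnorm_lt_one_iff, fnorm_le_iff]
    intro i hi
    rw [happ 0 i (by push_cast; omega)]
    rfl
  · intro n
    rw [← c.dig_appr a n, ← sub_eq_zero, ← dig_sub]
    apply dig_eq_zero
    rw [fnorm_le_iff]
    intro i hi
    rw [toL_sub, HahnSeries.coeff_sub, happ (n + 1) i (by push_cast; omega), sub_self]

end CFD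

lemma fnorm_sub_fracPart_lt (x : FF K) : fnorm (x - polyF (intPoly x)) < 1 := by
  rw [sub_intPoly, fnorm_lt_one_iff]
  exact fnorm_fracPart _

/-- iterates of the Gauss map -/
def gIt (α : FF K) (k : ℕ) : FF K := gaussMap^[k] α

lemma gIt_succ (α : FF K) (k : ℕ) : gIt α (k + 1) = (gIt α k)⁻¹ - polyF (pquot α k) := by
  unfold gIt
  rw [Function.iterate_succ_apply']
  unfold pquot
  rw [sub_intPoly]
  rfl

lemma gIt_lt (α : FF K) (hα : fnorm α < 1) (k : ℕ) : fnorm (gIt α k) < 1 := by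
  cases k with
  | zero => exact hα
  | succ k =>
    rw [gIt_succ]
    exact fnorm_sub_fracPart_lt _

/-- the errors of the convergents -/
def errs (α : FF K) : ℕ → FF K
  | 0 => α
  | (k + 1) => - gIt α (k + 1) * errs α k

lemma fnorm_eq_of_lt {x y : FF K} (h : fnorm (x - y) < fnorm x) : fnorm y = fnorm x := by
  apply le_antisymm
  · have : y = x - (x - y) := by ring
    rw [this]
    exact le_trans (fnorm_sub_le _ _) (max_le le_rfl h.le)
  · by_contra hc
    have h1 : fnorm x ≤ max (fnorm (x - y)) (fnorm y) := by
      have := fnorm_add_le (x - y) y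
      rwa [sub_add_cancel] at this
    exact absurd h1 (not_le.mpr (max_lt h (not_le.mp hc)))

lemma pquot_norm {α : FF K} (hα : fnorm α < 1) {k : ℕ} (h : gIt α k ≠ 0) :
    fnorm (polyF (pquot α k)) = (fnorm (gIt α k))⁻¹ := by
  rw [← fnorm_inv]
  apply fnorm_eq_of_lt
  rw [← gIt_succ, fnorm_inv]
  refine lt_of_lt_of_le (gIt_lt α hα _) ?_
  have h0 : 0 < fnorm (gIt α k) := lt_of_le_of_ne (fnorm_nonneg _)
    (fun h' => h (fnorm_eq_zero.mp h'.symm))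
  exact (one_le_inv₀ h0).mpr (gIt_lt α hα k).le

lemma errs_rec {α : FF K} (k : ℕ) (h : gIt α (k + 1) ≠ 0) :
    errs α (k + 2) = polyF (pquot α (k + 1)) * errs α (k + 1) + errs α k := by
  have h1 : errs α (k + 2) = - gIt α (k + 2) * errs α (k + 1) := rfl
  have h2 : errs α (k + 1) = - gIt α (k + 1) * errs α k := rfl
  rw [h1, gIt_succ, h2]
  field_simp
  ring

lemma cf_main {α : FF K} (hα : fnorm α < 1) (hirr : FIrrational α) (k : ℕ) :
    (∀ i ≤ k, gIt α i ≠ 0) ∧ cfQ α k ≠ 0 ∧ cfQ α (k + 1) ≠ 0 ∧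
    (∃ P, α * polyF (cfQ α k) - errs α k = polyF P) ∧
    (∃ P, α * polyF (cfQ α (k + 1)) - errs α (k + 1) = polyF P) ∧
    fnorm (errs α k) * fnorm (polyF (cfQ α (k + 1))) = 1 ∧
    fnorm (polyF (cfQ α k)) < fnorm (polyF (cfQ α (k + 1))) := by
  induction k with
  | zero =>
    have hα0 : α ≠ 0 := by
      rintro rfl
      exact hirr 0 1 one_ne_zero (by rw [polyF_zero, zero_mul])
    have h0 : gIt α 0 ≠ 0 := hα0
    have hn := pquot_norm hα h0
    have hpos : 0 < fnorm α := lt_of_le_of_ne (fnorm_nonneg _)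
      (fun h' => hα0 (fnorm_eq_zero.mp h'.symm))
    have hn' : fnorm (polyF (cfQ α 1)) = (fnorm α)⁻¹ := hn
    refine ⟨?_, one_ne_zero, ?_, ⟨0, ?_⟩, ⟨1, ?_⟩, ?_, ?_⟩
    · intro i hi
      obtain rfl : i = 0 := by omega
      exact h0
    · intro h
      have h' : cfQ α 1 = 0 := h
      rw [h', polyF_zero, fnorm_zero] at hn'
      exact (inv_pos.mpr hpos).ne hn'
    · show α * polyF 1 - α = _
      rw [polyF_one, polyF_zero]; ring
    · show α * polyF (pquot α 0) - (- gIt α 1 * α) = _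
      rw [gIt_succ, polyF_one]
      show α * polyF (pquot α 0) - (- (α⁻¹ - _) * α) = _
      field_simp
      ring
    · show fnorm α * fnorm (polyF (cfQ α 1)) = 1
      rw [hn']
      exact mul_inv_cancel₀ hpos.ne'
    · show fnorm (polyF 1) < fnorm (polyF (cfQ α 1))
      rw [hn', polyF_one, fnorm_one]
      exact (one_lt_inv₀ hpos).mpr hα
  | succ k ih =>
    obtain ⟨ha, hb, hc, ⟨P0, hd⟩, ⟨P1, he⟩, hf, hg⟩ := ih
    have hk : gIt α (k + 1) ≠ 0 := by
      intro h
      have h2 : errs α (k + 1) = - gIt α (k + 1) * errs α k := rfl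
      rw [h, neg_zero, zero_mul] at h2
      rw [h2, sub_zero] at he
      exact hirr _ _ hc he
    have hpos : 0 < fnorm (gIt α (k + 1)) := lt_of_le_of_ne (fnorm_nonneg _)
      (fun h' => hk (fnorm_eq_zero.mp h'.symm))
    have hn := pquot_norm hα hk
    have hlt := gIt_lt α hα (k + 1)
    have hq : cfQ α (k + 2) = pquot α (k + 1) * cfQ α (k + 1) + cfQ α k := rfl
    have hQ1 : 0 < fnorm (polyF (cfQ α (k + 1))) := lt_of_le_of_lt (fnorm_nonneg _) hg
    have h1 : fnorm (polyF (pquot α (k + 1) * cfQ α (k + 1))) =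
        (fnorm (gIt α (k + 1)))⁻¹ * fnorm (polyF (cfQ α (k + 1))) := by
      rw [polyF_mul, fnorm_mul, hn]
    have hbig : fnorm (polyF (cfQ α (k + 1))) <
        (fnorm (gIt α (k + 1)))⁻¹ * fnorm (polyF (cfQ α (k + 1))) :=
      lt_mul_of_one_lt_left hQ1 ((one_lt_inv₀ hpos).mpr hlt)
    have h2 : fnorm (polyF (cfQ α (k + 2))) =
        (fnorm (gIt α (k + 1)))⁻¹ * fnorm (polyF (cfQ α (k + 1))) := by
      rw [← h1]
      apply fnorm_eq_of_lt
      rw [h1, fnorm_sub_comm, ← polyF_sub, hq, add_sub_cancel_left]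
      exact hg.trans hbig
    refine ⟨?_, hc, ?_, ⟨P1, he⟩, ⟨pquot α (k + 1) * P1 + P0, ?_⟩, ?_, ?_⟩
    · intro i hi
      rcases Nat.lt_or_ge i (k + 1) with h | h
      · exact ha i (by omega)
      · obtain rfl : i = k + 1 := by omega
        exact hk
    · intro h
      have h' : cfQ α (k + 2) = 0 := h
      rw [h', polyF_zero, fnorm_zero] at h2
      linarith
    · show α * polyF (cfQ α (k + 2)) - errs α (k + 2) = _
      rw [errs_rec k hk, hq, polyF_add, polyF_mul, polyF_add, polyF_mul, ← he, ← hd]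
      ring
    · show fnorm (- gIt α (k + 1) * errs α k) * fnorm (polyF (cfQ α (k + 2))) = 1
      rw [h2, fnorm_mul, fnorm_neg]
      field_simp
      linarith
    · show _ < fnorm (polyF (cfQ α (k + 2)))
      rw [h2]
      exact hbig

/-- the continued fraction data of an irrational `α` -/
def cfData {α : FF K} (hα : fnorm α < 1) (hirr : FIrrational α) : CFD α where
  Q := cfQ α
  Q_ne := fun k => (cf_main hα hirr k).2.1
  D := fun k => (cfQ α k).natDegree
  hD := fun _ => rfl
  D_zero := by simp [cfQ]
  D_mono := by
    apply strictMono_nat_of_lt_succ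
    intro k
    obtain ⟨-, hb, hc, -, -, -, hg⟩ := cf_main hα hirr k
    rw [fnorm_polyF hb, fnorm_polyF hc, zpow_lt_zpow_iff_right₀ one_lt_qK] at hg
    exact_mod_cast hg
  δ := errs α
  hδ := fun k => (cf_main hα hirr k).2.2.2.1
  nδ := by
    intro k
    obtain ⟨-, hb, hc, -, -, hf, -⟩ := cf_main hα hirr k
    rw [fnorm_polyF hc] at hf
    rw [zpow_neg]
    exact eq_inv_of_mul_eq_one_left hf

end Aux

end FPSDA
namespace FPSDA

section Aux

variable {K : Type*} [Field K] [Fintype K]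

lemma edist_FF (x y : FF K) : edist x y = ENNReal.ofReal (fnorm (x - y)) := edist_dist x y

namespace CFD

variable {α : FF K} (c : CFD α)

lemma dimH_le_of_cover (B : Set (FF K)) (hB : ∀ θ ∈ B, fnorm θ < 1) (s : ℝ≥0) (A : ℝ)
    (h : ∀ n : ℕ, ∃ N ≥ n, ∃ W : Finset (Fin N → K),
      (∀ θ ∈ B, (fun i : Fin N => c.dig θ i) ∈ W) ∧
      (W.card : ℝ) ≤ A * (qK K ^ N) ^ (s : ℝ)) : dimH B ≤ s := by
  choose N hN W hW hcard using h
  apply dimH_le_of_hausdorffMeasure_ne_top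
  let t : ∀ n : ℕ, W n → Set (FF K) := fun n w =>
    {θ | fnorm θ < 1 ∧ ∀ i : Fin (N n), c.dig θ i = w.1 i}
  have hdiam : ∀ n i, Metric.ediam (t n i) ≤ ENNReal.ofReal ((qK K ^ (N n))⁻¹) := by
    intro n i
    apply Metric.ediam_le
    intro x hx y hy
    rw [edist_FF]
    apply ENNReal.ofReal_le_ofReal
    have h1 : fnorm (x - y) < 1 := lt_of_le_of_lt (fnorm_sub_le x y) (max_lt hx.1 hy.1)
    refine (c.fnorm_le_of_dig h1 (N := N n) ?_).trans ?_
    · intro m hm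
      rw [dig_sub, hx.2 ⟨m, hm⟩, hy.2 ⟨m, hm⟩, sub_self]
    · rw [← zpow_natCast, ← zpow_neg]
      exact zpow_le_zpow_right₀ one_lt_qK.le (by omega)
  have hle : ∀ n, ∑ i, Metric.ediam (t n i) ^ (s : ℝ) ≤ ENNReal.ofReal A := by
    intro n
    have hp : 0 < qK K ^ (N n) := pow_pos qK_pos _
    calc ∑ i, Metric.ediam (t n i) ^ (s : ℝ)
        ≤ ∑ i : W n, (ENNReal.ofReal ((qK K ^ (N n))⁻¹)) ^ (s : ℝ) := by
          apply Finset.sum_le_sum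
          intro i _
          exact ENNReal.rpow_le_rpow (hdiam n i) s.2
      _ = ENNReal.ofReal ((W n).card * ((qK K ^ (N n))⁻¹) ^ (s : ℝ)) := by
          rw [Finset.sum_const, ENNReal.ofReal_rpow_of_pos (inv_pos.mpr hp), nsmul_eq_mul,
            ENNReal.ofReal_mul (by positivity)]
          simp
      _ ≤ ENNReal.ofReal A := by
          apply ENNReal.ofReal_le_ofReal
          rw [Real.inv_rpow hp.le]
          have := hcard n
          rw [← div_eq_mul_inv, div_le_iff₀ (Real.rpow_pos_of_pos hp _)]
          exact this
  have := Measure.hausdorffMeasure_le_liminf_sum (s : ℝ) B (l := atTop)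
    (fun n : ℕ => ENNReal.ofReal ((qK K ^ n)⁻¹)) (by
      rw [← ENNReal.ofReal_zero]
      apply ENNReal.tendsto_ofReal
      exact (tendsto_pow_atTop_atTop_of_one_lt one_lt_qK).inv_tendsto_atTop) t
    (Eventually.of_forall fun n i => (hdiam n i).trans (by
      apply ENNReal.ofReal_le_ofReal
      apply inv_anti₀ (pow_pos qK_pos _)
      exact pow_le_pow_right₀ one_lt_qK.le (hN n)))
    (Eventually.of_forall fun n θ hθ => by
      rw [Set.mem_iUnion]
      exact ⟨⟨_, hW n θ hθ⟩, hB θ hθ, fun i => rfl⟩)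
  refine ne_top_of_le_ne_top (ENNReal.ofReal_ne_top (r := A)) (this.trans ?_)
  exact (liminf_le_liminf (Eventually.of_forall hle)).trans_eq (liminf_const _)

lemma dimH_le_one {α : FF K} (c : CFD α) (B : Set (FF K)) (hB : ∀ θ ∈ B, fnorm θ < 1) : dimH B ≤ 1 := by
  have := c.dimH_le_of_cover B hB 1 1 (fun n => ⟨n, le_rfl, Finset.univ, fun _ _ =>
    Finset.mem_univ _, by simp⟩)
  simpa using this

end CFD

section Count

variable (E : ℕ → ℕ) (T : ℕ → Finset ℕ) (v : ℕ → ℕ → K) (J0 : ℕ)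

/-- extend a finite word by zero -/
def extW {N : ℕ} (w : Fin N → K) (n : ℕ) : K := if h : n < N then w ⟨n, h⟩ else 0

/-- the words of length `E J` avoiding all the patterns -/
def words (J : ℕ) : Finset (Fin (E J) → K) :=
  Finset.univ.filter (fun w => ∀ j, J0 ≤ j → j < J → ¬ ∀ n ∈ T j, extW w n = v j n)

lemma words_step (hE : StrictMono E) (b : ℕ) (hT : ∀ j, (T j).card ≤ b)
    (hT2 : ∀ j, ∀ n ∈ T j, E j ≤ n ∧ n < E (j + 1)) (J : ℕ) (hJ : J0 ≤ J) :
    ((words E T v J0 (J + 1)).card : ℝ) ≤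
      (words E T v J0 J).card * (qK K ^ (E (J + 1) - E J) * (1 - (qK K ^ b)⁻¹)) := by
  set L := E (J + 1) - E J with hL
  have hEJ : E J < E (J + 1) := hE (Nat.lt_succ_self J)
  let Pt : Finset (Fin L → K) := Fintype.piFinset
    (fun i : Fin L => if E J + i ∈ T J then {v J (E J + i)} else Finset.univ)
  have hPt : qK K ^ L * (qK K ^ b)⁻¹ ≤ (Pt.card : ℝ) := by
    have h1 : Pt.card = Fintype.card K ^ (Finset.univ.filter
        (fun i : Fin L => ¬ E J + i ∈ T J)).card := by
      simp only [Pt]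
      rw [Fintype.card_piFinset, ← Finset.prod_const, Finset.prod_filter]
      apply Finset.prod_congr rfl
      intro i _
      by_cases h : E J + (i : ℕ) ∈ T J <;> simp [h]
    have h2 : (Finset.univ.filter (fun i : Fin L => E J + i ∈ T J)).card ≤ b := by
      refine le_trans ?_ (hT J)
      apply Finset.card_le_card_of_injOn (fun i : Fin L => E J + (i : ℕ))
      · intro i hi
        simpa using hi
      · intro i _ j _ hij
        ext
        simpa using hij
    have h3 := Finset.card_filter_add_card_filter_not (s := (Finset.univ : Finset (Fin L)))
      (fun i : Fin L => E J + i ∈ T J)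
    rw [Finset.card_univ, Fintype.card_fin] at h3
    rw [h1, ← div_eq_mul_inv, div_le_iff₀ (pow_pos qK_pos _)]
    push_cast
    rw [← pow_add]
    exact pow_le_pow_right₀ one_lt_qK.le (by omega)
  have hV : ((Ptᶜ).card : ℝ) ≤ qK K ^ L * (1 - (qK K ^ b)⁻¹) := by
    have h1 := Finset.card_compl_add_card Pt
    have h2 : ((Ptᶜ).card : ℝ) + Pt.card = qK K ^ L := by
      have h3 : Fintype.card (Fin L → K) = Fintype.card K ^ L := by simp
      rw [h3] at h1
      exact_mod_cast h1
    linarith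
  have hinj : (words E T v J0 (J + 1)).card ≤ (words E T v J0 J ×ˢ Ptᶜ).card := by
    apply Finset.card_le_card_of_injOn
      (fun w => (fun i : Fin (E J) => w ⟨i, by omega⟩, fun i : Fin L => w ⟨E J + i, by omega⟩))
    · intro w hw
      simp only [words, Finset.coe_filter, Finset.mem_univ, true_and, Set.mem_ofPred_eq] at hw
      simp only [Finset.coe_product, Set.mem_prod, Finset.mem_coe, words, Finset.mem_filter,
        Finset.mem_univ, true_and, Finset.mem_compl]
      constructor
      · intro j hj1 hj2 hall
        apply hw j hj1 (by omega)
        intro n hn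
        rw [← hall n hn]
        have h4 := hT2 j n hn
        have h5 : E (j + 1) ≤ E J := hE.monotone (by omega)
        have h6 : n < E J := by omega
        have h7 : n < E (J + 1) := by omega
        simp [extW, h6, h7]
      · intro hP
        apply hw J hJ (by omega)
        intro n hn
        have h4 := hT2 J n hn
        have h5 := Fintype.mem_piFinset.mp hP ⟨n - E J, by omega⟩
        have h6 : E J + (n - E J) = n := by omega
        simp only [h6, hn, if_true, Finset.mem_singleton] at h5
        simp [extW, h4.2, h5]
    · intro w _ w' _ hww
      simp only [Prod.mk.injEq] at hww
      ext i
      by_cases h : (i : ℕ) < E J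
      · exact congrFun hww.1 ⟨i, h⟩
      · have h2 := congrFun hww.2 ⟨i - E J, by omega⟩
        have h6 : E J + (i - E J) = (i : ℕ) := by omega
        simpa [h6] using h2
  rw [Finset.card_product] at hinj
  calc ((words E T v J0 (J + 1)).card : ℝ) ≤ (words E T v J0 J).card * (Ptᶜ).card := by
        exact_mod_cast hinj
    _ ≤ _ := by gcongr

lemma words_card (hE : StrictMono E) (b : ℕ) (hT : ∀ j, (T j).card ≤ b)
    (hT2 : ∀ j, ∀ n ∈ T j, E j ≤ n ∧ n < E (j + 1)) (J : ℕ) (hJ : J0 ≤ J) :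
    ((words E T v J0 J).card : ℝ) ≤ qK K ^ (E J) * (1 - (qK K ^ b)⁻¹) ^ (J - J0) := by
  have hρ : 0 ≤ 1 - (qK K ^ b)⁻¹ := by
    rw [sub_nonneg]
    exact inv_le_one_of_one_le₀ (one_le_pow₀ one_lt_qK.le)
  induction J, hJ using Nat.le_induction with
  | base =>
    simp only [Nat.sub_self, pow_zero, mul_one]
    have : (words E T v J0 J0).card ≤ Fintype.card (Fin (E J0) → K) := Finset.card_le_univ _
    have h3 : Fintype.card (Fin (E J0) → K) = Fintype.card K ^ (E J0) := by simp
    rw [h3] at this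
    exact_mod_cast this
  | succ J hJ ih =>
    have hEJ : E J < E (J + 1) := hE (Nat.lt_succ_self J)
    refine (words_step E T v J0 hE b hT hT2 J hJ).trans ?_
    calc _ ≤ (qK K ^ (E J) * (1 - (qK K ^ b)⁻¹) ^ (J - J0)) *
          (qK K ^ (E (J + 1) - E J) * (1 - (qK K ^ b)⁻¹)) := by
          gcongr
      _ = qK K ^ (E J + (E (J + 1) - E J)) * (1 - (qK K ^ b)⁻¹) ^ (J - J0 + 1) := by
          rw [pow_add, pow_succ]; ring
      _ = _ := by
          rw [show E J + (E (J + 1) - E J) = E (J + 1) by omega,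
            show J - J0 + 1 = J + 1 - J0 by omega]

end Count

end Aux

end FPSDA
namespace FPSDA

section Aux

variable {K : Type*} [Field K] [Fintype K]

lemma num_aux {q ρ : ℝ} (hq : 1 < q) (h0 : 0 < ρ) (h1 : ρ < 1) (M : ℕ) :
    ∃ s : ℝ≥0, s < 1 ∧ ∀ E J J0 : ℕ, J0 ≤ J → E ≤ M * J →
      q ^ E * ρ ^ (J - J0) ≤ (ρ ^ J0)⁻¹ * (q ^ E) ^ (s : ℝ) := by
  obtain ⟨n0, hn0⟩ := pow_unbounded_of_one_lt (q ^ M) ((one_lt_inv₀ h0).mpr h1)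
  obtain ⟨n, hn1, hn⟩ : ∃ n : ℕ, 1 ≤ n ∧ q ^ M ≤ (ρ⁻¹) ^ n :=
    ⟨n0 + 1, by omega, hn0.le.trans
      (pow_le_pow_right₀ ((one_lt_inv₀ h0).mpr h1).le (Nat.le_succ _))⟩
  have hnR : (1 : ℝ) ≤ n := by exact_mod_cast hn1
  have hnpos : (0 : ℝ) < n := by linarith
  have hinv : (n : ℝ)⁻¹ ≤ 1 := inv_le_one_of_one_le₀ hnR
  have hinv0 : 0 < (n : ℝ)⁻¹ := inv_pos.mpr hnpos
  obtain ⟨s, hs⟩ : ∃ s : ℝ≥0, (s : ℝ) = 1 - (n : ℝ)⁻¹ :=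
    ⟨Real.toNNReal (1 - (n : ℝ)⁻¹), Real.coe_toNNReal _ (by linarith)⟩
  refine ⟨s, ?_, ?_⟩
  · rw [← NNReal.coe_lt_coe, hs, NNReal.coe_one]
    linarith
  intro E J J0 hJ hE
  rw [hs]
  have hqE : 0 < q ^ E := by positivity
  have hk : (q ^ E) ^ ((n : ℝ)⁻¹) ≤ (ρ⁻¹) ^ J := by
    calc (q ^ E) ^ ((n : ℝ)⁻¹) ≤ (((ρ⁻¹) ^ J) ^ n) ^ ((n : ℝ)⁻¹) := by
          apply Real.rpow_le_rpow hqE.le _ hinv0.le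
          calc q ^ E ≤ q ^ (M * J) := pow_le_pow_right₀ hq.le hE
            _ = (q ^ M) ^ J := pow_mul _ _ _
            _ ≤ ((ρ⁻¹) ^ n) ^ J := by gcongr
            _ = _ := by rw [← pow_mul, ← pow_mul, mul_comm]
      _ = _ := Real.pow_rpow_inv_natCast (by positivity) (by omega)
  have hsplit : q ^ E = (q ^ E) ^ (1 - (n : ℝ)⁻¹) * (q ^ E) ^ ((n : ℝ)⁻¹) := by
    rw [← Real.rpow_add hqE]
    simp
  have hρ : ρ ^ (J - J0) * (ρ⁻¹) ^ J = (ρ ^ J0)⁻¹ := by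
    have : ρ ^ J = ρ ^ (J - J0) * ρ ^ J0 := by rw [← pow_add]; congr 1; omega
    rw [inv_pow, this]
    field_simp
  calc q ^ E * ρ ^ (J - J0)
      = (q ^ E) ^ (1 - (n : ℝ)⁻¹) * ((q ^ E) ^ ((n : ℝ)⁻¹) * ρ ^ (J - J0)) := by
        conv_lhs => rw [hsplit]
        ring
    _ ≤ (q ^ E) ^ (1 - (n : ℝ)⁻¹) * ((ρ⁻¹) ^ J * ρ ^ (J - J0)) := by gcongr
    _ = _ := by rw [mul_comm ((ρ⁻¹) ^ J), hρ, mul_comm]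

namespace CFD

lemma dimH_lt_one {α : FF K} (c : CFD α) (M : ℕ) (hfreq : ∃ᶠ k in atTop, c.D k ≤ M * k)
    (ε : ℝ) (hε : 0 < ε) : dimH (sBad α ε) < 1 := by
  obtain ⟨C, hC⟩ : ∃ C : ℕ, qK K ^ (-((C : ℤ) + 2)) < ε / 2 := by
    obtain ⟨C, hC⟩ := pow_unbounded_of_one_lt (ε / 2)⁻¹ (one_lt_qK (K := K))
    refine ⟨C, ?_⟩
    have h1 : (qK K ^ C)⁻¹ < ε / 2 := by
      rw [inv_lt_comm₀ (pow_pos qK_pos _) (by positivity)]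
      exact hC
    refine lt_of_le_of_lt ?_ h1
    rw [← zpow_natCast, ← zpow_neg]
    exact zpow_le_zpow_right₀ one_lt_qK.le (by omega)
  let E : ℕ → ℕ := fun j => c.D ((C + 1) * j)
  let T : ℕ → Finset ℕ := fun j =>
    insert (E j) ((Finset.range C).image (fun i => c.D ((C + 1) * j + 1) + i))
  let v : ℕ → ℕ → K := fun j n => if n = E j then 1 else 0
  have hE : StrictMono E := fun a b hab => c.D_mono (by
    exact Nat.mul_lt_mul_of_pos_left hab (by omega))
  have hadd : ∀ a i : ℕ, c.D a + i ≤ c.D (a + i) := by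
    intro a i
    induction i with
    | zero => simp
    | succ i ih => have := c.D_lt (a + i); rw [← add_assoc, ← add_assoc]; omega
  have hT : ∀ j, (T j).card ≤ C + 1 := by
    intro j
    refine (Finset.card_insert_le _ _).trans ?_
    have := Finset.card_image_le (s := Finset.range C)
      (f := fun i => c.D ((C + 1) * j + 1) + i)
    rw [Finset.card_range] at this
    omega
  have hT2 : ∀ j, ∀ n ∈ T j, E j ≤ n ∧ n < E (j + 1) := by
    intro j n hn
    simp only [T, Finset.mem_insert, Finset.mem_image, Finset.mem_range] at hn
    rcases hn with rfl | ⟨i, hi, rfl⟩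
    · exact ⟨le_rfl, hE (Nat.lt_succ_self j)⟩
    · have h1 := c.D_lt ((C + 1) * j)
      have h2 := hadd ((C + 1) * j + 1) C
      have h3 : (C + 1) * j + 1 + C = (C + 1) * (j + 1) := by ring
      rw [h3] at h2
      simp only [E]
      omega
  set ρ : ℝ := 1 - (qK K ^ (C + 1))⁻¹ with hρ
  have hq1 : 1 < qK K ^ (C + 1) := one_lt_pow₀ one_lt_qK (by omega)
  have hρ0 : 0 < ρ := by
    rw [hρ, sub_pos]
    exact inv_lt_one_of_one_lt₀ hq1
  have hρ1 : ρ < 1 := by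
    have : 0 < (qK K ^ (C + 1))⁻¹ := inv_pos.mpr (by linarith)
    linarith
  obtain ⟨s, hs1, hs⟩ := num_aux (one_lt_qK (K := K)) hρ0 hρ1 (2 * M * (C + 1) + 1)
  let B : ℕ → Set (FF K) := fun H => {θ | fnorm θ < 1 ∧ ∀ x : Polynomial K,
    (H : ℝ) ≤ fnorm (polyF x) → ε / 2 < fnorm (polyF x) * sdist (α * polyF x - θ)}
  have hcover : sBad α ε ⊆ ⋃ H, B H := by
    intro θ hθ
    have h1 : ENNReal.ofReal (ε / 2) < sBadLiminf α θ := by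
      refine lt_of_lt_of_le ?_ hθ.2
      rw [ENNReal.ofReal_lt_ofReal_iff hε]
      linarith
    have h2 := eventually_lt_of_lt_liminf h1
    rw [eventually_comap, eventually_atTop] at h2
    obtain ⟨a, ha⟩ := h2
    obtain ⟨H, hH⟩ := exists_nat_ge a
    rw [Set.mem_iUnion]
    refine ⟨H, hθ.1, fun x hx => ?_⟩
    have h3 := ha _ (hH.trans hx) x rfl
    exact (ENNReal.ofReal_lt_ofReal_iff_of_nonneg (by positivity)).mp h3
  have hB : ∀ H, dimH (B H) ≤ s := by
    intro H
    obtain ⟨J0, hJ0⟩ := pow_unbounded_of_one_lt (H : ℝ) (one_lt_qK (K := K))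
    have hw : ∀ θ ∈ B H, ∀ J, (fun i : Fin (E J) => c.dig θ i) ∈ words E T v J0 J := by
      intro θ hθ J
      simp only [words, Finset.mem_filter, Finset.mem_univ, true_and]
      intro j hj1 hj2 hall
      have hext : ∀ n ∈ T j, c.dig θ n = v j n := by
        intro n hn
        rw [← hall n hn]
        have h1 := hT2 j n hn
        have h2 : E (j + 1) ≤ E J := hE.monotone hj2
        have h3 : n < E J := by omega
        simp [extW, h3]
      have hd1 : c.dig θ (c.D ((C + 1) * j)) ≠ 0 := by
        have := hext (E j) (by simp [T])
        simp only [v, if_true] at this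
        rw [show c.D ((C + 1) * j) = E j from rfl, this]
        exact one_ne_zero
      have hd2 : ∀ i < C, c.dig θ (c.D ((C + 1) * j + 1) + i) = 0 := by
        intro i hi
        have := hext (c.D ((C + 1) * j + 1) + i) (by
          simp only [T, Finset.mem_insert, Finset.mem_image, Finset.mem_range]
          exact Or.inr ⟨i, hi, rfl⟩)
        rw [this]
        have h1 := c.D_lt ((C + 1) * j)
        simp only [v, E]
        rw [if_neg (by omega)]
      obtain ⟨x, hx1, hx2⟩ := c.exists_good hd1 hd2
      have hlarge : (H : ℝ) ≤ fnorm (polyF x) := by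
        rw [hx1]
        refine hJ0.le.trans ?_
        rw [← zpow_natCast]
        apply zpow_le_zpow_right₀ one_lt_qK.le
        have h1 : (C + 1) * j + 1 ≤ c.D ((C + 1) * j + 1) := c.D_mono.le_apply
        have h2 : j ≤ (C + 1) * j := Nat.le_mul_of_pos_left _ (by omega)
        omega
      have h4 := hθ.2 x hlarge
      have h5 : fnorm (polyF x) * sdist (α * polyF x - θ) ≤ qK K ^ (-((C : ℤ) + 2)) := by
        calc _ ≤ fnorm (polyF x) * qK K ^ (-((c.D ((C + 1) * j + 1) : ℤ) + C + 1)) :=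
              mul_le_mul_of_nonneg_left hx2 (fnorm_nonneg _)
          _ = _ := by
              rw [hx1, ← zpow_add₀ qK_ne]
              congr 1
              ring
      linarith
    apply c.dimH_le_of_cover (B H) (fun θ hθ => hθ.1) s ((ρ ^ J0)⁻¹)
    intro n
    obtain ⟨k, hk, hDk⟩ := (frequently_atTop.mp hfreq) ((C + 1) * (n + 1 + J0))
    set J := k / (C + 1) with hJ
    have hJge : n + 1 + J0 ≤ J := by
      rw [hJ, Nat.le_div_iff_mul_le (by omega), mul_comm]
      exact hk
    have hJk : (C + 1) * J ≤ k := Nat.mul_div_le _ _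
    have hkJ : k < (C + 1) * (J + 1) := Nat.lt_mul_div_succ _ (by omega)
    have hEJ : E J ≤ (2 * M * (C + 1) + 1) * J := by
      have h1 : E J ≤ c.D k := c.D_mono.monotone hJk
      have h2 : k ≤ 2 * (C + 1) * J := by nlinarith
      have h3 : M * k ≤ M * (2 * (C + 1) * J) := Nat.mul_le_mul_left _ h2
      nlinarith
    refine ⟨E J, ?_, words E T v J0 J, fun θ hθ => hw θ hθ J, ?_⟩
    · have : J ≤ E J := hE.le_apply
      omega
    · exact (words_card E T v J0 hE (C + 1) hT hT2 J (by omega)).trans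
        (hs _ _ _ (by omega) hEJ)
  refine lt_of_le_of_lt (dimH_mono hcover) ?_
  rw [dimH_iUnion]
  refine lt_of_le_of_lt (iSup_le hB) ?_
  exact_mod_cast hs1

end CFD

end Aux

end FPSDA
namespace FPSDA

section Aux

variable {K : Type*} [Field K] [Fintype K]

namespace CFD

lemma count_bound {α : FF K} (c : CFD α) (M k0 : ℕ) (hM : 0 < M)
    (hk : ∀ k ≥ k0, M * k ≤ c.D k) (N : ℕ) :
    N ≤ Nat.count (fun n => n ∉ Set.range c.D) N + (k0 + N / M + 1) := by
  rw [Nat.count_eq_card_filter_range]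
  have h1 := Finset.card_filter_add_card_filter_not (s := Finset.range N)
    (fun n => n ∉ Set.range c.D)
  rw [Finset.card_range] at h1
  have h2 : ((Finset.range N).filter (fun n => ¬ n ∉ Set.range c.D)).card
      ≤ k0 + N / M + 1 := by
    calc _ ≤ ((Finset.range (k0 + N / M + 1)).image c.D).card := by
          apply Finset.card_le_card
          intro n hn
          simp only [Finset.mem_filter, Finset.mem_range, not_not, Set.mem_range] at hn
          obtain ⟨hn, k, rfl⟩ := hn
          rw [Finset.mem_image]
          refine ⟨k, ?_, rfl⟩
          rw [Finset.mem_range]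
          by_contra hcon
          have h0 : k0 ≤ k := by
            generalize N / M = t at hcon
            omega
          have h3 := hk k h0
          have h4 : k ≤ N / M := by
            rw [Nat.le_div_iff_mul_le hM, mul_comm]
            omega
          generalize N / M = t at hcon h4
          omega
      _ ≤ _ := by
          refine Finset.card_image_le.trans ?_
          rw [Finset.card_range]
  generalize N / M = t at h2 ⊢
  omega

lemma infinite_p {α : FF K} (c : CFD α) (k0 : ℕ) (hk : ∀ k ≥ k0, 2 * k ≤ c.D k) :
    (Set.ofPred (fun n => n ∉ Set.range c.D)).Infinite := by
  intro hfin
  have h1 := c.count_bound 2 k0 (by omega) hk (2 * (hfin.toFinset.card + k0 + 2))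
  have h2 : Nat.count (fun n => n ∉ Set.range c.D) (2 * (hfin.toFinset.card + k0 + 2))
      ≤ hfin.toFinset.card := by
    rw [Nat.count_eq_card_filter_range]
    apply Finset.card_le_card
    intro n hn
    rw [Finset.mem_filter] at hn
    rw [Set.Finite.mem_toFinset]
    exact hn.2
  omega

lemma le_dimH {α : FF K} (c : CFD α)
    (h : ∀ M : ℕ, ∃ k0, ∀ k ≥ k0, M * k ≤ c.D k) :
    1 ≤ dimH {θ : FF K | fnorm θ < 1 ∧ ∀ k, c.dig θ (c.D k) = 1} := by
  set S : Set (FF K) := {θ : FF K | fnorm θ < 1 ∧ ∀ k, c.dig θ (c.D k) = 1} with hS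
  let p : ℕ → Prop := fun n => n ∉ Set.range c.D
  have hp : (Set.ofPred p).Infinite := by
    obtain ⟨k0, hk0⟩ := h 2
    exact c.infinite_p k0 hk0
  let e := Fintype.equivFin K
  let f : FF K → ℝ := fun θ => Real.ofDigits (fun i => e (c.dig θ (Nat.nth p i)))
  have hone : 1 < Fintype.card K := Fintype.one_lt_card
  have himg : 1 ≤ dimH (f '' S) := by
    have h1 : Set.Icc (0 : ℝ) 1 ⊆ f '' S := by
      intro y hy
      obtain ⟨s, -, hs⟩ := Real.ofDigits_SurjOn hone hy
      obtain ⟨θ, hθ1, hθ2⟩ := c.exists_dig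
        (fun n => if p n then e.symm (s (Nat.count p n)) else 1)
      refine ⟨θ, ⟨hθ1, fun k => ?_⟩, ?_⟩
      · rw [hθ2, if_neg]
        simp [p]
      · rw [← hs]
        simp only [f]
        congr 1
        funext i
        rw [hθ2, if_pos (Nat.nth_mem_of_infinite hp i), Nat.count_nth_of_infinite hp,
          Equiv.apply_symm_apply]
    refine le_trans ?_ (dimH_mono h1)
    rw [Real.dimH_of_nonempty_interior]
    · simp
    · rw [interior_Icc]
      exact ⟨1 / 2, by norm_num, by norm_num⟩
  have hr : ∀ M : ℕ, 2 ≤ M → ENNReal.ofReal (1 - (M : ℝ)⁻¹) ≤ dimH S := by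
    intro M hM
    obtain ⟨k0, hk0⟩ := h M
    have hMR : (2 : ℝ) ≤ M := by exact_mod_cast hM
    have hMinv : (M : ℝ)⁻¹ ≤ 2⁻¹ := inv_anti₀ (by norm_num) hMR
    have hMinv0 : 0 < (M : ℝ)⁻¹ := inv_pos.mpr (by linarith)
    obtain ⟨r, hr⟩ : ∃ r : ℝ≥0, (r : ℝ) = 1 - (M : ℝ)⁻¹ :=
      ⟨Real.toNNReal (1 - (M : ℝ)⁻¹), Real.coe_toNNReal _ (by norm_num at hMinv; linarith)⟩
    have hr0 : 0 < r := by
      rw [← NNReal.coe_pos, hr]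
      norm_num at hMinv
      linarith
    obtain ⟨C, hC⟩ : ∃ C : ℝ≥0, (C : ℝ) = qK K ^ (k0 + 2) :=
      ⟨Real.toNNReal (qK K ^ (k0 + 2)), Real.coe_toNNReal _ (pow_pos qK_pos _).le⟩
    have hold : HolderOnWith C r f S := by
      intro x hx y hy
      by_cases hxy : x = y
      · rw [hxy, edist_self]; exact zero_le
      have hne : x - y ≠ 0 := sub_ne_zero.mpr hxy
      have hlt : fnorm (x - y) < 1 := lt_of_le_of_lt (fnorm_sub_le x y) (max_lt hx.1 hy.1)
      obtain ⟨N, hN⟩ : ∃ N : ℕ, fnorm (x - y) = qK K ^ (-((N : ℤ) + 1)) := by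
        rw [fnorm_lt_one_iff, fnorm_of_ne hne, zpow_le_zpow_iff_right₀ one_lt_qK] at hlt
        refine ⟨(HahnSeries.order (toL (x - y)) - 1).toNat, ?_⟩
        rw [fnorm_of_ne hne]
        congr 1
        omega
      have hagree : ∀ n < N, c.dig x n = c.dig y n := by
        intro n hn
        have := c.dig_eq_zero (θ := x - y) (n := n) (by
          rw [hN]
          exact zpow_le_zpow_right₀ one_lt_qK.le (by omega))
        rw [dig_sub] at this
        exact sub_eq_zero.mp this
      have habs : |f x - f y| ≤ (qK K ^ (Nat.count p N))⁻¹ := by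
        apply Real.abs_ofDigits_sub_ofDigits_le
        intro i hi
        rw [hagree _ (Nat.nth_lt_of_lt_count hi)]
      rw [edist_FF, edist_dist, Real.dist_eq, ENNReal.ofReal_rpow_of_pos (by
        rw [hN]; exact zpow_pos qK_pos _), hr, ← ENNReal.ofReal_coe_nnreal (p := C), hC,
        ← ENNReal.ofReal_mul (pow_pos qK_pos _).le]
      apply ENNReal.ofReal_le_ofReal
      refine habs.trans ?_
      rw [hN, ← Real.rpow_natCast, ← Real.rpow_natCast, ← Real.rpow_intCast,
        ← Real.rpow_mul qK_pos.le, ← Real.rpow_add qK_pos, ← Real.rpow_neg qK_pos.le]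
      apply Real.rpow_le_rpow_of_exponent_le one_lt_qK.le
      have hcb : (N : ℝ) ≤ Nat.count p N + (k0 + (N / M : ℕ) + 1) := by
        exact_mod_cast c.count_bound M k0 (by omega) hk0 N
      have hdiv : ((N / M : ℕ) : ℝ) ≤ N * (M : ℝ)⁻¹ := by
        rw [← div_eq_mul_inv]; exact Nat.cast_div_le
      push_cast
      nlinarith
    have h2 := hold.dimH_image_le hr0
    have h3 : 1 ≤ dimH S / r := himg.trans h2
    rw [ENNReal.le_div_iff_mul_le (Or.inl (by exact_mod_cast hr0.ne'))
      (Or.inl ENNReal.coe_ne_top), one_mul] at h3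
    rw [← hr, ENNReal.ofReal_coe_nnreal]
    exact h3
  have hlim : Tendsto (fun M : ℕ => ENNReal.ofReal (1 - (M : ℝ)⁻¹)) atTop (nhds 1) := by
    rw [← ENNReal.ofReal_one]
    apply ENNReal.tendsto_ofReal
    have := (tendsto_const_nhds (x := (1 : ℝ))).sub (tendsto_inv_atTop_nhds_zero_nat (𝕜 := ℝ))
    simpa using this
  refine le_of_tendsto hlim ?_
  filter_upwards [eventually_ge_atTop 2] with M hM using hr M hM

lemma dimH_eq_one {α : FF K} (c : CFD α)
    (h : ∀ M : ℕ, ∃ k0, ∀ k ≥ k0, M * k ≤ c.D k) :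
    dimH (sBad α (qK K ^ (-2 : ℤ))) = 1 := by
  apply le_antisymm
  · exact c.dimH_le_one _ (fun θ hθ => hθ.1)
  · refine (c.le_dimH h).trans (dimH_mono ?_)
    intro θ hθ
    refine ⟨hθ.1, ?_⟩
    unfold sBadLiminf
    apply le_liminf_of_le
    · isBoundedDefault
    · rw [eventually_comap]
      filter_upwards [eventually_ge_atTop 1] with a ha x hx
      apply ENNReal.ofReal_le_ofReal
      apply c.bad_of_dig (fun k => by rw [hθ.2 k]; exact one_ne_zero)
      rintro rfl
      rw [polyF_zero, fnorm_zero] at hx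
      linarith

end CFD

lemma rpow_aux (d k M : ℕ) (hk : 1 ≤ k) :
    (qK K ^ (d : ℤ)) ^ (1 / (k : ℝ)) < qK K ^ M ↔ d < M * k := by
  have hkR : (0 : ℝ) < k := by exact_mod_cast hk
  rw [zpow_natCast, ← Real.rpow_natCast, ← Real.rpow_natCast, ← Real.rpow_mul qK_pos.le,
    Real.rpow_lt_rpow_left_iff one_lt_qK, mul_one_div, div_lt_iff₀ hkR]
  exact_mod_cast Iff.rfl

end Aux

end FPSDA

/-- For an irrational `α ∈ 𝕀` with continued fraction convergent denominators `(Q_k)`: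
there exists `ε > 0` such that `Bad^ε(α)` has full Hausdorff dimension if and only if
`‖Q_k‖^{1/k} → ∞`. -/
theorem dimH_sBad_iff_growth {K : Type*} [Field K] [Fintype K]
    (α : FF K) (hα : fnorm α < 1) (hirr : FIrrational α) :
    (∃ ε : ℝ, 0 < ε ∧ dimH (sBad α ε) = 1) ↔
      Filter.Tendsto (fun k : ℕ => fnorm (polyF (cfQ α k)) ^ (1 / (k : ℝ)))
        Filter.atTop Filter.atTop := by
  let c := FPSDA.cfData hα hirr
  have hn : ∀ k, fnorm (polyF (cfQ α k)) = FPSDA.qK K ^ (c.D k : ℤ) := fun k =>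
    FPSDA.fnorm_polyF (c.Q_ne k)
  constructor
  · rintro ⟨ε, hε, hdim⟩
    by_contra hnot
    rw [Filter.tendsto_atTop] at hnot
    push Not at hnot
    obtain ⟨b, hb⟩ := hnot
    obtain ⟨M, hM⟩ := pow_unbounded_of_one_lt b (FPSDA.one_lt_qK (K := K))
    have hf : ∃ᶠ k in Filter.atTop, c.D k ≤ M * k := by
      refine (hb.and_eventually (Filter.eventually_ge_atTop 1)).mono ?_
      rintro k ⟨h1, h2⟩
      rw [hn k] at h1
      exact ((FPSDA.rpow_aux _ _ _ h2).mp (h1.trans hM)).le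
    exact absurd hdim (c.dimH_lt_one M hf ε hε).ne
  · intro ht
    refine ⟨FPSDA.qK K ^ (-2 : ℤ), zpow_pos FPSDA.qK_pos _, c.dimH_eq_one ?_⟩
    intro M
    obtain ⟨k0, hk0⟩ := Filter.eventually_atTop.mp
      (Filter.tendsto_atTop.mp ht (FPSDA.qK K ^ M))
    refine ⟨k0 + 1, fun k hk => ?_⟩
    have h1 := hk0 k (by omega)
    rw [hn k] at h1
    by_contra hcon
    exact absurd ((FPSDA.rpow_aux (K := K) (c.D k) k M (by omega)).mpr (by omega)) (not_lt.mpr h1)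
end
end
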